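/- Fix an integer k ≥ 1 and suppose ρ : ℝ → (0,1) satisfies Φ_{(1)}(ρ(x)) = x for all sufficiently large x. Then, as x → ∞, x · log(1/ρ(x)) = ( ((k+1)/k) · ζ((k+1)/k) · Γ((k+1)/k) · x^{1/k} / log x )^{k/(k+1)} · ( 1 − (k/(k+1)) · (log log x)/(log x) + O(1/log x) ). -/

import Mathlib

/-!
Write `ρ = exp(-1/y)`, `φ(v) = v^k exp(-v^k)` and `Q(N) = ∑_p φ(p / N)`. Grouping the double series
by `j` gives `Φ_{(1)}(ρ) = ∑_j (y/j) Q((y/j)^{1/k})` (`Phim_eq`), so the problem reduces to a prime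
number theorem with relative error `O(1 / log N)` for the smooth weight `φ`, followed by an
inversion.

The sharp remainder is obtained for the coefficients `Λ(n) log n`, whose Dirichlet series is
`1/(s-1)^2 + (ζ₁'/ζ₁)'(s)` with `ζ₁(s) = (s-1) ζ(s)` entire and zero-free on `Re s ≥ 1`. There
`(ζ₁'/ζ₁)'` grows at most polynomially (`norm_deriv_logDeriv_le`): upper bounds come from an
integral representation and Cauchy's estimates, the lower bound for `ζ₁` from the `3-4-1`
inequality. By Mellin inversion, the difference between `∑ Λ(n) log n φ(n/N)` and
`∫₁^∞ log x φ(x/N) dx` is the integral of `(ζ₁'/ζ₁)'(s) N^s Γ(1 + s/k)` over any line `Re s > 1`.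
The Gamma factor makes this integral converge uniformly as `Re s → 1`, so that the difference is
`O(N)` (`smoothed_pnt`). This is smaller than the main term by a factor `log N`.

Since `φ` concentrates `n` near `N`, the factor `Λ(n) log n` can be replaced by `log² N` on the
primes; Chebyshev's upper bounds, summed dyadically, control the cost, and
`Q(N) = c N / log N · (1 + O(1 / log N))` with `c = Γ((k+1)/k) / k` (`Qsum_asymp`). Summation over `j`
yields `Φ_{(1)}(ρ) = ζ(s) Γ(s) y^s / log y · (1 + O(1 / log y))`, `s = (k+1)/k` (`Phim_asymp`). With
`x = Φ_{(1)}(ρ)`, taking logarithms expresses `log y` through `log x`, and `x log(1/ρ) = x / y`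
follows (`inversion_core`).
-/

open Filter

/-- `Φ_{(m)}(ρ) = (ρ d/dρ)^m Φ(ρ) = ∑_{j≥1} ∑_p j^{m-1} p^{km} ρ^{j p^k}`. -/
noncomputable def Phim (k m : ℕ) (ρ : ℝ) : ℝ :=
  ∑' (j : ℕ+) (p : Nat.Primes),
    (j : ℝ) ^ ((m : ℤ) - 1) * ((p : ℕ) : ℝ) ^ (k * m) * ρ ^ ((j : ℕ) * (p : ℕ) ^ k)

noncomputable def zetaR (s : ℝ) : ℝ := (riemannZeta (s : ℂ)).re

/-! ### An integral representation of `(s - 1) ζ(s)` -/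

/-- The fractional part of `x`, cut off to `x > 1`; its Mellin transform at `-s` is
`∫₁^∞ {x} x^(-s-1) dx`. -/
noncomputable def cutFract (x : ℝ) : ℂ :=
  (Set.Ioi (1 : ℝ)).indicator (fun t => ((Int.fract t : ℝ) : ℂ)) x

lemma norm_cutFract_le (x : ℝ) : ‖cutFract x‖ ≤ 1 := by
  unfold cutFract
  by_cases hx : x ∈ Set.Ioi (1 : ℝ)
  · rw [Set.indicator_of_mem hx, Complex.norm_real, Real.norm_of_nonneg (Int.fract_nonneg _)]
    exact (Int.fract_lt_one _).le
  · rw [Set.indicator_of_notMem hx]; simp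

lemma measurable_cutFract : Measurable cutFract := by
  unfold cutFract
  exact ((Complex.measurable_ofReal.comp measurable_fract)).indicator measurableSet_Ioi

lemma cutFract_locInt : MeasureTheory.LocallyIntegrableOn cutFract (Set.Ioi 0) := by
  apply MeasureTheory.LocallyIntegrable.locallyIntegrableOn
  exact (MeasureTheory.locallyIntegrable_const (1 : ℝ)).mono
    measurable_cutFract.aestronglyMeasurable
    (Filter.Eventually.of_forall fun x => by simpa using norm_cutFract_le x)

lemma cutFract_top : cutFract =O[atTop] (fun x : ℝ => x ^ (-(0 : ℝ))) := by
  refine Asymptotics.IsBigO.of_bound 1 (Eventually.of_forall fun x => ?_)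
  simpa using norm_cutFract_le x

lemma cutFract_bot (b : ℝ) : cutFract =O[nhdsWithin 0 (Set.Ioi 0)] (fun x : ℝ => x ^ (-b)) := by
  refine Asymptotics.IsBigO.of_bound 1 ?_
  have : ∀ᶠ x : ℝ in nhdsWithin 0 (Set.Ioi 0), x < 1 :=
    (eventually_lt_nhds zero_lt_one).filter_mono nhdsWithin_le_nhds
  filter_upwards [this] with x hx
  have : cutFract x = 0 := by
    unfold cutFract
    exact Set.indicator_of_notMem (by simp [hx.le]) _
  rw [this]; simp

lemma mellin_cutFract_conv {s : ℂ} (hs : 0 < s.re) : MellinConvergent cutFract (-s) :=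
  mellinConvergent_of_isBigO_rpow (a := 0) (b := -s.re - 1) cutFract_locInt cutFract_top
    (by simpa using hs) (cutFract_bot _) (by simp)

lemma mellin_cutFract_eq (s : ℂ) : mellin cutFract (-s) =
    ∫ t in Set.Ioi (1 : ℝ), ((Int.fract t : ℝ) : ℂ) * (t : ℂ) ^ (-(s + 1)) := by
  rw [mellin]
  have : (fun t : ℝ => (t : ℂ) ^ (-s - 1) • cutFract t) =
      (Set.Ioi (1 : ℝ)).indicator (fun t => ((Int.fract t : ℝ) : ℂ) * (t : ℂ) ^ (-(s + 1))) := by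
    ext t
    unfold cutFract
    by_cases ht : t ∈ Set.Ioi (1 : ℝ)
    · rw [Set.indicator_of_mem ht, Set.indicator_of_mem ht, smul_eq_mul, mul_comm]
      congr 2; ring
    · rw [Set.indicator_of_notMem ht, Set.indicator_of_notMem ht, smul_zero]
  rw [this, MeasureTheory.setIntegral_indicator measurableSet_Ioi]
  congr 2
  ext t; simp

lemma riemannZeta₁_eq_of_one_lt {s : ℂ} (hs : 1 < s.re) :
    riemannZeta₁ s = s - s * (s - 1) * mellin cutFract (-s) := by
  have hs1 : s ≠ 1 := by rintro rfl; simp at hs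
  have hs1' : s - 1 ≠ 0 := sub_ne_zero.mpr hs1
  have hz := riemannZeta_eq_inv_sub_mul hs1
  have hL := LSeries_eq_mul_integral' (fun _ => (1 : ℂ)) zero_le_one hs (by
    simp only [norm_one, Finset.sum_const, Nat.card_Icc, nsmul_eq_mul, mul_one,
      add_tsub_cancel_right, Real.rpow_one]
    exact Asymptotics.isBigO_refl _ _)
  have hL1 : LSeries (fun _ => (1 : ℂ)) s = riemannZeta s := LSeries_one_eq_riemannZeta hs
  rw [hL1, hz] at hL
  have hinteg : ∫ t in Set.Ioi (1 : ℝ), (∑ _k ∈ Finset.Icc 1 ⌊t⌋₊, (1 : ℂ)) * (t : ℂ) ^ (-(s + 1))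
      = 1 / (s - 1) - mellin cutFract (-s) := by
    have h3 : ∫ (t : ℝ) in Set.Ioi 1, (t : ℂ) ^ (-s : ℂ) = 1 / (s - 1) := by
      rw [integral_Ioi_cpow_of_lt (by simpa using hs) zero_lt_one, Complex.ofReal_one,
        Complex.one_cpow, show -s + 1 = -(s - 1) by ring, neg_div_neg_eq]
    rw [← h3, mellin_cutFract_eq, ← MeasureTheory.integral_sub]
    · apply MeasureTheory.setIntegral_congr_fun measurableSet_Ioi
      intro t ht
      have ht0 : (0 : ℝ) < t := zero_lt_one.trans ht
      have htc : (t : ℂ) ≠ 0 := by exact_mod_cast ht0.ne'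
      have e1 : (t : ℂ) ^ (-s) = t * (t : ℂ) ^ (-(s + 1)) := by
        rw [show -s = 1 + -(s + 1) by ring, Complex.cpow_add _ _ htc, Complex.cpow_one]
      have e2 : ((⌊t⌋₊ : ℝ)) = t - Int.fract t := by
        rw [natCast_floor_eq_intCast_floor ht0.le]; exact (Int.self_sub_fract t).symm
      have e3 : ((⌊t⌋₊ : ℂ)) = t - (Int.fract t : ℝ) := by
        rw [← Complex.ofReal_sub, ← e2]; simp
      simp only [Finset.sum_const, Nat.card_Icc, nsmul_eq_mul, mul_one, add_tsub_cancel_right]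
      rw [e3, e1]; ring
    · exact integrableOn_Ioi_cpow_of_lt (by simpa using hs) zero_lt_one
    · have := mellin_cutFract_conv (s := s) (by linarith)
      rw [MellinConvergent] at this
      refine (this.mono_set (Set.Ioi_subset_Ioi zero_le_one)).congr_fun ?_ measurableSet_Ioi
      intro t ht
      simp only [cutFract, smul_eq_mul]
      rw [Set.indicator_of_mem ht, mul_comm]
      congr 2; ring
  rw [hinteg] at hL
  field_simp at hL
  rw [hL]; ring

/-- Integral representation of `(s - 1) ζ(s)`, extended from `Re s > 1` by analytic continuation. -/
lemma riemannZeta₁_eq {s : ℂ} (hs : 0 < s.re) :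
    riemannZeta₁ s = s - s * (s - 1) * mellin cutFract (-s) := by
  have hopen : IsOpen {s : ℂ | 0 < s.re} := isOpen_lt continuous_const Complex.continuous_re
  have hconv : Convex ℝ {s : ℂ | 0 < s.re} := convex_halfSpace_re_gt 0
  have hd : DifferentiableOn ℂ (fun s : ℂ => s - s * (s - 1) * mellin cutFract (-s))
      {s : ℂ | 0 < s.re} := by
    intro z hz
    have : DifferentiableAt ℂ (mellin cutFract) (-z) :=
      mellin_differentiableAt_of_isBigO_rpow (a := 0) (b := -z.re - 1) cutFract_locInt cutFract_top
        (by simpa using hz) (cutFract_bot _) (by simp)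
    have h2 : DifferentiableAt ℂ (fun s : ℂ => mellin cutFract (-s)) z :=
      DifferentiableAt.fun_comp' z this (by fun_prop)
    exact (DifferentiableAt.sub (by fun_prop) (by fun_prop)).differentiableWithinAt
  refine AnalyticOnNhd.eqOn_of_preconnected_of_eventuallyEq
    (𝕜 := ℂ) (differentiable_riemannZeta₁.differentiableOn.analyticOnNhd hopen)
    (hd.analyticOnNhd hopen) hconv.isPreconnected (z₀ := 2) (by simp) ?_ hs
  have : ∀ᶠ z : ℂ in nhds 2, 1 < z.re :=
    (isOpen_lt continuous_const Complex.continuous_re).mem_nhds (by simp)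
  filter_upwards [this] with z hz
  exact riemannZeta₁_eq_of_one_lt hz

lemma norm_mellin_cutFract_le {s : ℂ} (hs : 1 / 2 ≤ s.re) : ‖mellin cutFract (-s)‖ ≤ 2 := by
  rw [mellin_cutFract_eq]
  have h : ∫ t in Set.Ioi (1 : ℝ), t ^ (-(3 / 2 : ℝ)) = 2 := by
    rw [integral_Ioi_rpow_of_lt (by norm_num) zero_lt_one]; norm_num
  rw [← h]
  apply MeasureTheory.norm_integral_le_of_norm_le
  · exact integrableOn_Ioi_rpow_of_lt (by norm_num) zero_lt_one
  · refine (MeasureTheory.ae_restrict_iff' measurableSet_Ioi).mpr (Eventually.of_forall ?_)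
    intro t ht
    have ht0 : (0 : ℝ) < t := zero_lt_one.trans ht
    rw [norm_mul, Complex.norm_real, Real.norm_of_nonneg (Int.fract_nonneg _),
      Complex.norm_cpow_eq_rpow_re_of_pos ht0]
    calc Int.fract t * t ^ (-(s + 1)).re ≤ 1 * t ^ (-(s + 1)).re := by
          gcongr; exact (Int.fract_lt_one t).le
      _ = t ^ (-(s + 1)).re := one_mul _
      _ ≤ _ := by
          apply Real.rpow_le_rpow_of_exponent_le ht.le
          simp; linarith

/-- Polynomial growth of `(s - 1) ζ(s)` in vertical strips. The margin to the left of `Re s = 1`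
leaves room for Cauchy estimates of the first two derivatives on `Re s ≥ 1`. -/
lemma norm_riemannZeta₁_le {s : ℂ} (h1 : 1 / 2 ≤ s.re) (h2 : s.re ≤ 3) :
    ‖riemannZeta₁ s‖ ≤ 30 * (1 + |s.im|) ^ 2 := by
  rw [riemannZeta₁_eq (by linarith)]
  have hn : ‖s‖ ≤ 3 * (1 + |s.im|) := by
    refine (Complex.norm_le_abs_re_add_abs_im s).trans ?_
    rw [abs_of_nonneg (by linarith : 0 ≤ s.re)]
    nlinarith [abs_nonneg s.im]
  have hn1 : ‖s - 1‖ ≤ 2 * (1 + |s.im|) := by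
    refine (Complex.norm_le_abs_re_add_abs_im _).trans ?_
    have : |(s - 1).re| ≤ 2 := by rw [abs_le]; simp; constructor <;> linarith
    simp only [Complex.sub_im, Complex.one_im, sub_zero]
    nlinarith [abs_nonneg s.im]
  have hm := norm_mellin_cutFract_le h1
  calc _ ≤ ‖s‖ + ‖s‖ * ‖s - 1‖ * ‖mellin cutFract (-s)‖ := by
        refine (norm_sub_le _ _).trans ?_
        rw [norm_mul, norm_mul]
    _ ≤ 3 * (1 + |s.im|) + 3 * (1 + |s.im|) * (2 * (1 + |s.im|)) * 2 := by gcongr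
    _ ≤ _ := by nlinarith [abs_nonneg s.im]

/-! ### Bounds on the half-plane `Re s ≥ 1` -/

lemma norm_deriv_riemannZeta₁_le {s : ℂ} (h1 : 3 / 4 ≤ s.re) (h2 : s.re ≤ 5 / 2) :
    ‖deriv riemannZeta₁ s‖ ≤ 200 * (1 + |s.im|) ^ 2 := by
  have := Complex.norm_deriv_le_of_forall_mem_sphere_norm_le (f := riemannZeta₁) (c := s)
    (R := 1 / 4) (C := 30 * (1 + |s.im| + 1 / 4) ^ 2) (by norm_num)
    differentiable_riemannZeta₁.diffContOnCl (by
      intro z hz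
      have hz' : ‖z - s‖ = 1 / 4 := by simpa using hz
      have hre := (Complex.abs_re_le_norm (z - s)).trans_eq hz'
      have him := (Complex.abs_im_le_norm (z - s)).trans_eq hz'
      simp only [Complex.sub_re, Complex.sub_im] at hre him
      have hre2 := abs_le.mp hre
      refine (norm_riemannZeta₁_le (by linarith) (by linarith)).trans ?_
      have : |z.im| ≤ |s.im| + 1 / 4 := by
        have := abs_sub_abs_le_abs_sub z.im s.im
        linarith
      rw [add_assoc]
      gcongr)
  refine this.trans ?_
  nlinarith [abs_nonneg s.im]

lemma norm_deriv_deriv_riemannZeta₁_le {s : ℂ} (h1 : 1 ≤ s.re) (h2 : s.re ≤ 2) :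
    ‖deriv (deriv riemannZeta₁) s‖ ≤ 1250 * (1 + |s.im|) ^ 2 := by
  have hd : Differentiable ℂ (deriv riemannZeta₁) := by
    intro z
    exact (differentiable_riemannZeta₁.analyticAt z).deriv.differentiableAt
  have := Complex.norm_deriv_le_of_forall_mem_sphere_norm_le (f := deriv riemannZeta₁) (c := s)
    (R := 1 / 4) (C := 200 * (1 + |s.im| + 1 / 4) ^ 2) (by norm_num)
    hd.diffContOnCl (by
      intro z hz
      have hz' : ‖z - s‖ = 1 / 4 := by simpa using hz
      have hre := (Complex.abs_re_le_norm (z - s)).trans_eq hz'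
      have him := (Complex.abs_im_le_norm (z - s)).trans_eq hz'
      simp only [Complex.sub_re, Complex.sub_im] at hre him
      have hre2 := abs_le.mp hre
      refine (norm_deriv_riemannZeta₁_le (by linarith) (by linarith)).trans ?_
      have : |z.im| ≤ |s.im| + 1 / 4 := by
        have := abs_sub_abs_le_abs_sub z.im s.im
        linarith
      rw [add_assoc]
      gcongr)
  refine this.trans ?_
  nlinarith [abs_nonneg s.im]

lemma riemannZeta₁_ne_zero {s : ℂ} (h1 : 1 ≤ s.re) : riemannZeta₁ s ≠ 0 := by
  by_cases hs : s = 1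
  · simp [hs]
  · have := riemannZeta_ne_zero_of_one_le_re h1
    rw [riemannZeta_eq_inv_sub_mul hs] at this
    exact right_ne_zero_of_mul this

/-- Quantitative consequence of the `3-4-1` inequality. -/
lemma riemannZeta₁_pow_four_ge {x y : ℝ} (hx : 0 < x) (hx1 : x ≤ 1) (hy : 1 ≤ |y|) :
    x ^ 3 ≤ 30 ^ 3 * 120 * (1 + |y|) ^ 2 * ‖riemannZeta₁ (1 + x + Complex.I * y)‖ ^ 4 := by
  have h := DirichletCharacter.norm_LFunction_product_ge_one (N := 1) (1 : DirichletCharacter ℂ 1) hx y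
  simp only [DirichletCharacter.LFunctionTrivChar, one_pow,
    DirichletCharacter.LFunction_modOne_eq] at h
  have hy0 : y ≠ 0 := by rintro rfl; simp at hy; linarith
  have n1 : (1 + x : ℂ) ≠ 1 := by
    simp; exact_mod_cast hx.ne'
  have n2 : (1 + x + Complex.I * y : ℂ) ≠ 1 := by
    intro h; have := congrArg Complex.im h; simp at this; exact hy0 this
  have n3 : (1 + x + 2 * Complex.I * y : ℂ) ≠ 1 := by
    intro h; have := congrArg Complex.im h; simp at this; exact hy0 this
  rw [riemannZeta_eq_inv_sub_mul n1, riemannZeta_eq_inv_sub_mul n2,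
    riemannZeta_eq_inv_sub_mul n3] at h
  have b1 : ‖riemannZeta₁ (1 + x : ℂ)‖ ≤ 30 := by
    have := norm_riemannZeta₁_le (s := (1 + x : ℂ)) (by simp; linarith) (by simp; linarith)
    simpa using this
  have b3 : ‖riemannZeta₁ (1 + x + 2 * Complex.I * y : ℂ)‖ ≤ 120 * (1 + |y|) ^ 2 := by
    have := norm_riemannZeta₁_le (s := (1 + x + 2 * Complex.I * y : ℂ)) (by simp; linarith)
      (by simp; linarith)
    refine this.trans ?_
    simp [abs_mul]
    nlinarith
  have c1 : ‖((1 + x : ℂ) - 1)⁻¹‖ = x⁻¹ := by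
    rw [show (1 + x : ℂ) - 1 = x by ring, norm_inv, Complex.norm_real, Real.norm_of_nonneg hx.le]
  have c2 : ‖((1 + x + Complex.I * y : ℂ) - 1)⁻¹‖ ≤ 1 := by
    rw [norm_inv]
    apply inv_le_one_of_one_le₀
    refine hy.trans ?_
    have := Complex.abs_im_le_norm ((1 + x + Complex.I * y : ℂ) - 1)
    simpa using this
  have c3 : ‖((1 + x + 2 * Complex.I * y : ℂ) - 1)⁻¹‖ ≤ 1 := by
    rw [norm_inv]
    apply inv_le_one_of_one_le₀
    have := Complex.abs_im_le_norm ((1 + x + 2 * Complex.I * y : ℂ) - 1)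
    simp at this
    linarith
  simp only [norm_mul, norm_pow] at h
  rw [c1] at h
  have h2 : 1 ≤ (x⁻¹ * 30) ^ 3 * (1 * ‖riemannZeta₁ (1 + x + Complex.I * y)‖) ^ 4 *
      (1 * (120 * (1 + |y|) ^ 2)) := by
    refine h.le.trans ?_
    gcongr
  have hx3 : 0 < x ^ 3 := by positivity
  have h3 := mul_le_mul_of_nonneg_left h2 hx3.le
  refine (mul_one (x ^ 3)).symm.le.trans (h3.trans_eq ?_)
  field_simp

/-- Lower bound for `(s - 1) ζ(s)` away from the real axis. At horizontal distance at least `δ`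
from the line `Re s = 1` it comes from the `3-4-1` inequality; closer to the line, the mean value
inequality compares `s` with the point at distance `δ`. -/
lemma riemannZeta₁_lower_far {s : ℂ} (h1 : 1 ≤ s.re) (h2 : s.re ≤ 2) (hy : 1 ≤ |s.im|) :
    1 / (30 ^ 3 * 120 * 400 ^ 4 * (1 + |s.im|) ^ 10) ≤ ‖riemannZeta₁ s‖ := by
  set B := 1 + |s.im| with hB
  have hB2 : 2 ≤ B := by linarith
  set δ : ℝ := 1 / (30 ^ 3 * 120 * 400 ^ 4 * B ^ 10) with hδ
  have hδ0 : 0 < δ := by positivity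
  have hδ1 : δ ≤ 1 := by
    rw [hδ]
    apply div_le_one_of_le₀ _ (by positivity)
    have : 1 ≤ B ^ 10 := one_le_pow₀ (by linarith)
    linarith
  -- `δ` is chosen so that the lower bound at distance `δ` is twice the possible variation
  -- `200 * B ^ 2 * δ` over a horizontal segment of length `δ`
  have key : ∀ x : ℝ, δ ≤ x → x ≤ 1 →
      400 * B ^ 2 * δ ≤ ‖riemannZeta₁ (1 + x + Complex.I * s.im)‖ := by
    intro x hx hx1
    have h := riemannZeta₁_pow_four_ge (hδ0.trans_le hx) hx1 hy
    rw [← hB] at h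
    have h3 : δ ^ 3 ≤ x ^ 3 := by gcongr
    have h4 : 30 ^ 3 * 120 * B ^ 2 * (400 * B ^ 2 * δ) ^ 4 = δ ^ 3 := by
      have : 30 ^ 3 * 120 * 400 ^ 4 * B ^ 10 * δ = 1 := by rw [hδ]; field_simp
      calc _ = (30 ^ 3 * 120 * 400 ^ 4 * B ^ 10 * δ) * δ ^ 3 := by ring
        _ = _ := by rw [this, one_mul]
    have h5 := (h4.le.trans h3).trans h
    have h6 := le_of_mul_le_mul_left h5 (by positivity)
    exact le_of_pow_le_pow_left₀ (by norm_num) (norm_nonneg _) h6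
  have hs : s = 1 + ((s.re - 1 : ℝ) : ℂ) + Complex.I * s.im := by
    apply Complex.ext <;> simp
  have hge : δ ≤ 400 * B ^ 2 * δ := le_mul_of_one_le_left hδ0.le (by nlinarith)
  by_cases hc : δ ≤ s.re - 1
  · rw [hs]; exact hge.trans (key _ hc (by linarith))
  · push Not at hc
    have hk := key δ le_rfl hδ1
    have hmv : ‖riemannZeta₁ (1 + δ + Complex.I * s.im) - riemannZeta₁ s‖ ≤
        200 * B ^ 2 * ‖(1 + δ + Complex.I * s.im) - s‖ := by
      have hconv : Convex ℝ {z : ℂ | z.im = s.im ∧ 1 ≤ z.re ∧ z.re ≤ 2} := by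
        have h1 : Convex ℝ {z : ℂ | 1 ≤ z.re} := convex_halfSpace_re_ge 1
        have h2 : Convex ℝ {z : ℂ | z.re ≤ 2} := convex_halfSpace_re_le 2
        have h3 : Convex ℝ {z : ℂ | z.im ≤ s.im} := convex_halfSpace_im_le _
        have h4 : Convex ℝ {z : ℂ | s.im ≤ z.im} := convex_halfSpace_im_ge _
        convert! (h3.inter h4).inter (h1.inter h2) using 1
        ext z; simp [le_antisymm_iff]
      refine hconv.norm_image_sub_le_of_norm_deriv_le (f := riemannZeta₁)
        (fun z _ => differentiable_riemannZeta₁ z) (fun z hz => ?_) ⟨rfl, h1, h2⟩ ?_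
      · have := norm_deriv_riemannZeta₁_le (s := z) (by linarith [hz.2.1]) (by linarith [hz.2.2])
        rwa [hz.1] at this
      · refine ⟨by simp, by simp; linarith, by simp; linarith⟩
    have hdist : ‖(1 + δ + Complex.I * s.im) - s‖ ≤ δ := by
      have : (1 + δ + Complex.I * s.im) - s = ((δ - (s.re - 1) : ℝ) : ℂ) := by
        apply Complex.ext <;> simp; ring
      rw [this, Complex.norm_real, Real.norm_of_nonneg (by linarith)]
      linarith
    have h7 : 200 * B ^ 2 * ‖(1 + δ + Complex.I * s.im) - s‖ ≤ 200 * B ^ 2 * δ := by gcongr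
    have h8 := norm_sub_norm_le (riemannZeta₁ (1 + δ + Complex.I * s.im)) (riemannZeta₁ s)
    have : δ ≤ 200 * B ^ 2 * δ := le_mul_of_one_le_left hδ0.le (by nlinarith)
    linarith

lemma riemannZeta₁_lower : ∃ c : ℝ, 0 < c ∧ ∀ s : ℂ, 1 ≤ s.re → s.re ≤ 2 →
    c / (1 + |s.im|) ^ 10 ≤ ‖riemannZeta₁ s‖ := by
  have hK : IsCompact (Set.Icc (1 : ℝ) 2 ×ℂ Set.Icc (-1 : ℝ) 1) :=
    isCompact_Icc.reProdIm isCompact_Icc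
  obtain ⟨z, hz, hmin⟩ := hK.exists_isMinOn ⟨1, by simp [Complex.mem_reProdIm]⟩
    differentiable_riemannZeta₁.continuous.norm.continuousOn
  rw [Complex.mem_reProdIm] at hz
  have hpos : 0 < ‖riemannZeta₁ z‖ := norm_pos_iff.mpr (riemannZeta₁_ne_zero hz.1.1)
  refine ⟨min ‖riemannZeta₁ z‖ (1 / (30 ^ 3 * 120 * 400 ^ 4)), by positivity, fun s h1 h2 => ?_⟩
  have hB : 1 ≤ (1 + |s.im|) ^ 10 := one_le_pow₀ (by linarith [abs_nonneg s.im])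
  rcases le_total 1 |s.im| with hy | hy
  · refine le_trans ?_ (riemannZeta₁_lower_far h1 h2 hy)
    rw [← div_div 1 _ ((1 + |s.im|) ^ 10)]
    exact div_le_div_of_nonneg_right (min_le_right _ _) (by positivity)
  · have hm : ‖riemannZeta₁ z‖ ≤ ‖riemannZeta₁ s‖ :=
      hmin (by rw [Complex.mem_reProdIm]; exact ⟨⟨h1, h2⟩, abs_le.mp hy⟩)
    refine le_trans ?_ hm
    exact (div_le_self (by positivity) hB).trans (min_le_left _ _)

lemma deriv_logDeriv_riemannZeta₁ {s : ℂ} (h1 : 1 ≤ s.re) :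
    HasDerivAt (logDeriv riemannZeta₁)
      ((deriv (deriv riemannZeta₁) s * riemannZeta₁ s - deriv riemannZeta₁ s * deriv riemannZeta₁ s)
        / riemannZeta₁ s ^ 2) s := by
  have hd : DifferentiableAt ℂ (deriv riemannZeta₁) s :=
    (differentiable_riemannZeta₁.analyticAt s).deriv.differentiableAt
  exact hd.hasDerivAt.div (differentiable_riemannZeta₁ s).hasDerivAt (riemannZeta₁_ne_zero h1)

/-- Polynomial bound, up to the line `Re s = 1`, for the regular part of the Dirichlet series of
`Λ(n) log n`. -/
lemma norm_deriv_logDeriv_le : ∃ C : ℝ, 0 < C ∧ ∀ s : ℂ, 1 ≤ s.re → s.re ≤ 2 →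
    ‖deriv (logDeriv riemannZeta₁) s‖ ≤ C * (1 + |s.im|) ^ 24 := by
  obtain ⟨c, hc, hlow⟩ := riemannZeta₁_lower
  refine ⟨77500 / c ^ 2, by positivity, fun s h1 h2 => ?_⟩
  rw [(deriv_logDeriv_riemannZeta₁ h1).deriv, norm_div, norm_pow]
  have hl := hlow s h1 h2
  have b0 := norm_riemannZeta₁_le (s := s) (by linarith) (by linarith)
  have b1 := norm_deriv_riemannZeta₁_le (s := s) (by linarith) (by linarith)
  have b2 := norm_deriv_deriv_riemannZeta₁_le h1 h2
  set B := 1 + |s.im|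
  have hB : 1 ≤ B := by simp [B]
  have hnum : ‖deriv (deriv riemannZeta₁) s * riemannZeta₁ s -
      deriv riemannZeta₁ s * deriv riemannZeta₁ s‖ ≤ 77500 * B ^ 4 := by
    refine (norm_sub_le _ _).trans ?_
    rw [norm_mul, norm_mul]
    calc _ ≤ (1250 * B ^ 2) * (30 * B ^ 2) + (200 * B ^ 2) * (200 * B ^ 2) := by gcongr
      _ = _ := by ring
  calc _ ≤ 77500 * B ^ 4 / (c / B ^ 10) ^ 2 := by gcongr
    _ = _ := by field_simp

/-- The Dirichlet series of `Λ(n) log n` is `(ζ'/ζ)'`, that is, a double pole at `1` plus a function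
which is regular on `Re s ≥ 1`. -/
lemma LSeries_log_vonMangoldt {w : ℂ} (hw : 1 < w.re) :
    LSeries (LSeries.logMul (fun n => (ArithmeticFunction.vonMangoldt n : ℂ))) w =
      1 / (w - 1) ^ 2 + deriv (logDeriv riemannZeta₁) w := by
  have hopen : IsOpen {s : ℂ | 1 < s.re} := isOpen_lt continuous_const Complex.continuous_re
  have heq : ∀ z : ℂ, 1 < z.re → LSeries (fun n => (ArithmeticFunction.vonMangoldt n : ℂ)) z
      = 1 / (z - 1) - logDeriv riemannZeta₁ z := by
    intro z hz
    have hz1 : z ≠ 1 := by rintro rfl; simp at hz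
    have hz1' : z - 1 ≠ 0 := sub_ne_zero.mpr hz1
    rw [ArithmeticFunction.LSeries_vonMangoldt_eq_deriv_riemannZeta_div hz,
      deriv_riemannZeta_eq_neg_inv_sub_sq_mul_add hz1, riemannZeta_eq_inv_sub_mul hz1, logDeriv_apply]
    have := riemannZeta₁_ne_zero hz.le
    field_simp
    ring
  have hder : deriv (LSeries (fun n => (ArithmeticFunction.vonMangoldt n : ℂ))) w =
      deriv (fun z => 1 / (z - 1) - logDeriv riemannZeta₁ z) w := by
    apply Filter.EventuallyEq.deriv_eq
    filter_upwards [hopen.mem_nhds hw] with z hz using heq z hz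
  have habs : LSeries.abscissaOfAbsConv (fun n => (ArithmeticFunction.vonMangoldt n : ℂ)) < w.re := by
    refine lt_of_le_of_lt ?_ (by exact_mod_cast hw : (1 : EReal) < w.re)
    apply LSeries.abscissaOfAbsConv_le_of_forall_lt_LSeriesSummable
    intro y hy
    exact ArithmeticFunction.LSeriesSummable_vonMangoldt (by simpa using hy)
  rw [LSeries_deriv habs] at hder
  have hw1 : w - 1 ≠ 0 := by
    intro h; rw [sub_eq_zero] at h; rw [h] at hw; simp at hw
  have h1 : HasDerivAt (fun z : ℂ => 1 / (z - 1)) (-(1 / (w - 1) ^ 2)) w := by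
    have := ((hasDerivAt_id w).sub_const 1).fun_inv hw1
    simpa [neg_div] using this
  have h2 := (deriv_logDeriv_riemannZeta₁ hw.le)
  rw [(h1.fun_sub h2.differentiableAt.hasDerivAt).deriv] at hder
  linear_combination -hder

/-! ### Mellin inversion for the weight -/

lemma norm_Gamma_le_Gamma_re {z : ℂ} (hz : 0 < z.re) : ‖Complex.Gamma z‖ ≤ Real.Gamma z.re := by
  rw [Complex.Gamma_eq_integral hz, Complex.GammaIntegral, Real.Gamma_eq_integral hz]
  refine MeasureTheory.norm_integral_le_of_norm_le (Real.GammaIntegral_convergent hz) ?_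
  refine (MeasureTheory.ae_restrict_iff' measurableSet_Ioi).mpr (Eventually.of_forall ?_)
  intro t ht
  rw [norm_mul, Complex.norm_real, Real.norm_of_nonneg (Real.exp_pos _).le,
    Complex.norm_cpow_eq_rpow_re_of_pos ht]
  simp

/-- Each use of the functional equation `Γ(z + 1) = z Γ(z)` gains one power of `|Im z|`. -/
lemma norm_Gamma_mul_im_pow_le (m : ℕ) : ∀ z : ℂ, 0 < z.re →
    ‖Complex.Gamma z‖ * |z.im| ^ m ≤ Real.Gamma (z.re + m) := by
  induction m with
  | zero => intro z hz; simpa using norm_Gamma_le_Gamma_re hz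
  | succ m ih =>
    intro z hz
    have hz0 : z ≠ 0 := by rintro rfl; simp at hz
    have h := ih (z + 1) (by simp; linarith)
    rw [Complex.Gamma_add_one z hz0, norm_mul] at h
    simp only [Complex.add_im, Complex.one_im, add_zero, Complex.add_re, Complex.one_re] at h
    calc ‖Complex.Gamma z‖ * |z.im| ^ (m + 1) = |z.im| * ‖Complex.Gamma z‖ * |z.im| ^ m := by ring
      _ ≤ ‖z‖ * ‖Complex.Gamma z‖ * |z.im| ^ m := by
          gcongr; exact Complex.abs_im_le_norm z
      _ ≤ _ := h
      _ = _ := by congr 1; push_cast; ring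

lemma continuousAt_realGamma {c : ℝ} (hc : 0 < c) : ContinuousAt Real.Gamma c := by
  refine (Real.differentiableAt_Gamma fun m h => ?_).continuousAt
  have : (0 : ℝ) ≤ m := by positivity
  linarith

/-- `Γ` decays faster than any power of the height, uniformly for `1 ≤ Re z ≤ 3`. -/
lemma Gamma_decay (M : ℕ) : ∃ K : ℝ, 0 < K ∧ ∀ c ∈ Set.Icc (1 : ℝ) 3, ∀ t : ℝ,
    ‖Complex.Gamma (c + t * Complex.I)‖ * (1 + |t|) ^ M ≤ K := by
  have hcont : ContinuousOn (fun c : ℝ => 2 ^ M * (Real.Gamma c + Real.Gamma (c + M)))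
      (Set.Icc 1 3) := by
    intro c hc
    have hc0 : 0 < c := by linarith [hc.1]
    have h1 : ContinuousAt Real.Gamma c := continuousAt_realGamma hc0
    have h2 : ContinuousAt Real.Gamma (c + M) :=
      continuousAt_realGamma (by positivity)
    have h3 : ContinuousAt (fun c : ℝ => Real.Gamma (c + M)) c :=
      ContinuousAt.comp' h2 (by fun_prop)
    exact (continuousAt_const.mul (h1.add h3)).continuousWithinAt
  obtain ⟨K, hK⟩ := isCompact_Icc.bddAbove_image hcont
  refine ⟨max K 1, by positivity, fun c hc t => ?_⟩
  have hc0 : 0 < c := by linarith [hc.1]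
  have hk : 2 ^ M * (Real.Gamma c + Real.Gamma (c + M)) ≤ K := hK ⟨c, hc, rfl⟩
  refine le_trans ?_ (hk.trans (le_max_left _ _))
  have g0 := norm_Gamma_mul_im_pow_le 0 (c + t * Complex.I) (by simpa using hc0)
  have gM := norm_Gamma_mul_im_pow_le M (c + t * Complex.I) (by simpa using hc0)
  simp at g0 gM
  have hp : (1 + |t|) ^ M ≤ 2 ^ M * (1 + |t| ^ M) := by
    rcases le_total |t| 1 with h | h
    · calc (1 + |t|) ^ M ≤ 2 ^ M := by gcongr; linarith
        _ ≤ _ := le_mul_of_one_le_right (by positivity) (by have : 0 ≤ |t| ^ M := by positivity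
                                                            linarith)
    · calc (1 + |t|) ^ M ≤ (2 * |t|) ^ M := by gcongr; linarith
        _ = 2 ^ M * |t| ^ M := mul_pow _ _ _
        _ ≤ _ := by gcongr; linarith
  calc _ ≤ ‖Complex.Gamma (c + t * Complex.I)‖ * (2 ^ M * (1 + |t| ^ M)) := by gcongr
    _ = 2 ^ M * (‖Complex.Gamma (c + t * Complex.I)‖ +
          ‖Complex.Gamma (c + t * Complex.I)‖ * |t| ^ M) := by ring
    _ ≤ _ := by gcongr

lemma continuous_Gamma_vertical {c : ℝ} (hc : 0 < c) :
    Continuous fun y : ℝ => Complex.Gamma (c + y * Complex.I) := by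
  rw [continuous_iff_continuousAt]
  intro y
  have h : ContinuousAt Complex.Gamma (c + y * Complex.I) := by
    apply (Complex.differentiableAt_Gamma _ ?_).continuousAt
    intro m h
    have := congrArg Complex.re h
    simp at this
    have : (0 : ℝ) ≤ m := by positivity
    linarith
  exact ContinuousAt.comp' h (by fun_prop)

lemma integrable_Gamma_vertical {c : ℝ} (hc : c ∈ Set.Icc (1 : ℝ) 3) :
    MeasureTheory.Integrable fun y : ℝ => Complex.Gamma (c + y * Complex.I) := by
  obtain ⟨K, hK, h⟩ := Gamma_decay 2
  refine (integrable_inv_one_add_sq.const_mul K).mono'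
    (continuous_Gamma_vertical (by linarith [hc.1])).aestronglyMeasurable
    (Eventually.of_forall fun y => ?_)
  have := h c hc y
  rw [← div_eq_mul_inv, le_div_iff₀ (by positivity)]
  refine le_trans ?_ this
  gcongr
  nlinarith [abs_nonneg y, sq_abs y]

/-- The weight `φ(v) = v^k exp(-v^k)`, where `v` is the ratio of a prime to the scale. -/
noncomputable def phi (k : ℕ) (v : ℝ) : ℝ := v ^ k * Real.exp (-v ^ k)

/-- The Cahen–Mellin integral. -/
lemma mellinInv_Gamma {c : ℝ} (hc : c ∈ Set.Icc (1 : ℝ) 3) {u : ℝ} (hu : 0 < u) :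
    ((Real.exp (-u) : ℝ) : ℂ) = (1 / (2 * Real.pi) : ℝ) *
      ∫ y : ℝ, (u : ℂ) ^ (-(c + y * Complex.I)) * Complex.Gamma (c + y * Complex.I) := by
  have hc0 : 0 < c := by linarith [hc.1]
  have hmel : ∀ s : ℂ, 0 < s.re → mellin (fun x : ℝ => ((Real.exp (-x) : ℝ) : ℂ)) s =
      Complex.Gamma s := by
    intro s hs
    rw [Complex.Gamma_eq_integral hs, mellin, Complex.GammaIntegral]
    simp only [smul_eq_mul, mul_comm]
  have h := mellinInv_mellin_eq c (fun x : ℝ => ((Real.exp (-x) : ℝ) : ℂ)) hu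
    (by
      have := Complex.GammaIntegral_convergent (s := c) (by simpa using hc0)
      rw [MellinConvergent]
      simpa only [smul_eq_mul, mul_comm] using this)
    (by
      rw [Complex.VerticalIntegrable]
      refine (integrable_Gamma_vertical hc).congr (Eventually.of_forall fun y => ?_)
      exact (hmel _ (by simpa using hc0)).symm)
    (by fun_prop)
  rw [← h, mellinInv, Complex.real_smul]
  congr 1
  apply MeasureTheory.integral_congr_ae
  refine Eventually.of_forall fun y => ?_
  simp only [smul_eq_mul]
  rw [hmel _ (by simpa using hc0)]

/-- The weight `φ` as an inverse Mellin transform: its Mellin transform is `Γ(1 + s / k) / k`, and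
`s = σ + i k y` parametrises the line of integration. -/
lemma phi_eq_integral {k : ℕ} (hk : 1 ≤ k) {σ : ℝ} (hσ : σ ∈ Set.Icc (0 : ℝ) 2) {v : ℝ}
    (hv : 0 < v) :
    ((phi k v : ℝ) : ℂ) = (1 / (2 * Real.pi) : ℝ) *
      ∫ y : ℝ, (v : ℂ) ^ (-(σ + k * y * Complex.I)) *
        Complex.Gamma ((1 + σ / k : ℝ) + y * Complex.I) := by
  have hk0 : (0 : ℝ) < k := by exact_mod_cast hk
  have hk1 : (1 : ℝ) ≤ k := by exact_mod_cast hk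
  have hkc : (k : ℂ) ≠ 0 := by exact_mod_cast hk0.ne'
  have hc : (1 + σ / k : ℝ) ∈ Set.Icc (1 : ℝ) 3 := by
    refine ⟨by have := hσ.1; simp; positivity, ?_⟩
    have : σ / k ≤ 2 := by rw [div_le_iff₀ hk0]; nlinarith [hσ.2]
    linarith
  rw [phi, Complex.ofReal_mul, mellinInv_Gamma hc (pow_pos hv k), mul_left_comm,
    ← MeasureTheory.integral_const_mul]
  congr 2
  ext y
  rw [← mul_assoc]
  congr 1
  have hvc : (v : ℂ) ≠ 0 := by exact_mod_cast hv.ne'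
  push_cast
  rw [← Complex.cpow_natCast, ← Complex.ofReal_natCast, ← Complex.ofReal_cpow hv.le]
  rw [show ((v ^ (k : ℝ) : ℝ) : ℂ) = (v : ℂ) ^ ((k : ℝ) : ℂ) from Complex.ofReal_cpow hv.le _]
  rw [← Complex.cpow_mul, ← Complex.cpow_add _ _ hvc]
  · congr 1
    push_cast
    field_simp
    ring
  · rw [← Complex.ofReal_log hv.le, ← Complex.ofReal_mul, Complex.ofReal_im]; linarith [Real.pi_pos]
  · rw [← Complex.ofReal_log hv.le, ← Complex.ofReal_mul, Complex.ofReal_im]; exact Real.pi_pos.le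

/-- The integral analogue of the Dirichlet series `∑ Λ(n) log n / n^w`; it accounts for the double
pole of that series at `w = 1`. -/
lemma integral_log_mul_cpow {w : ℂ} (hw : 1 < w.re) :
    MeasureTheory.IntegrableOn (fun x : ℝ => (Real.log x : ℂ) * (x : ℂ) ^ (-w)) (Set.Ioi 1) ∧
    ∫ x in Set.Ioi (1 : ℝ), (Real.log x : ℂ) * (x : ℂ) ^ (-w) = 1 / (w - 1) ^ 2 := by
  set f : ℝ → ℂ := (Set.Ioi (1 : ℝ)).indicator (fun _ => (1 : ℂ)) with hf
  have hloc : MeasureTheory.LocallyIntegrableOn f (Set.Ioi 0) := by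
    apply MeasureTheory.LocallyIntegrable.locallyIntegrableOn
    refine (MeasureTheory.locallyIntegrable_const (1 : ℝ)).mono
      ((measurable_const.indicator measurableSet_Ioi).aestronglyMeasurable)
      (Eventually.of_forall fun x => ?_)
    rw [hf]
    refine (norm_indicator_le_norm_self _ _).trans (by simp)
  have htop : f =O[atTop] (fun x : ℝ => x ^ (-(0 : ℝ))) := by
    refine Asymptotics.IsBigO.of_bound 1 (Eventually.of_forall fun x => ?_)
    rw [hf]
    refine (norm_indicator_le_norm_self _ _).trans (by simp)
  have hbot : ∀ b : ℝ, f =O[nhdsWithin 0 (Set.Ioi 0)] (fun x : ℝ => x ^ (-b)) := by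
    intro b
    refine Asymptotics.IsBigO.of_bound 1 ?_
    have : ∀ᶠ x : ℝ in nhdsWithin 0 (Set.Ioi 0), x < 1 :=
      (eventually_lt_nhds zero_lt_one).filter_mono nhdsWithin_le_nhds
    filter_upwards [this] with x hx
    have : f x = 0 := Set.indicator_of_notMem (by simp [hx.le]) _
    rw [this]; simp
  have hs : (1 - w).re < 0 := by simp; linarith
  have hswap : ∀ (g : ℝ → ℂ) (s : ℂ), (fun t : ℝ => (t : ℂ) ^ (s - 1) • (g t * f t)) =
      (Set.Ioi (1 : ℝ)).indicator (fun t => g t * (t : ℂ) ^ (s - 1)) := by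
    intro g s
    ext t
    by_cases ht : t ∈ Set.Ioi (1 : ℝ)
    · rw [hf, Set.indicator_of_mem ht, Set.indicator_of_mem ht, smul_eq_mul]; ring
    · rw [hf, Set.indicator_of_notMem ht, Set.indicator_of_notMem ht]; simp
  have hinteg : Set.Ioi (0 : ℝ) ∩ Set.Ioi 1 = Set.Ioi 1 := by ext t; simp
  have hmel : ∀ s : ℂ, s.re < 0 → mellin f s = -1 / s := by
    intro s hs
    have := hswap (fun _ => 1) s
    simp only [one_mul] at this
    rw [mellin, this, MeasureTheory.setIntegral_indicator measurableSet_Ioi, hinteg,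
      integral_Ioi_cpow_of_lt (by simp; linarith) zero_lt_one]
    simp
  obtain ⟨hconv, hder⟩ := mellin_hasDerivAt_of_isBigO_rpow (a := 0) (b := (1 - w).re - 1)
    hloc htop hs (hbot _) (by linarith)
  have heqf : (fun t : ℝ => Real.log t • f t) = fun t => ((Real.log t : ℝ) : ℂ) * f t := by
    ext t; simp
  rw [heqf] at hconv hder
  have hw1 : (1 - w) ≠ 0 := by intro h; rw [h] at hs; simp at hs
  have hder2 : HasDerivAt (mellin f) (1 / (1 - w) ^ 2) (1 - w) := by
    have h0 : HasDerivAt (fun s : ℂ => -1 / s) (1 / (1 - w) ^ 2) (1 - w) := by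
      have := ((hasDerivAt_id (1 - w)).fun_inv hw1).const_mul (-1)
      simpa [div_eq_mul_inv] using this
    refine h0.congr_of_eventuallyEq ?_
    filter_upwards [(isOpen_lt Complex.continuous_re continuous_const).mem_nhds hs] with s hs
    exact hmel s hs
  have hval := hder.unique hder2
  rw [mellin, hswap, MeasureTheory.setIntegral_indicator measurableSet_Ioi, hinteg,
    show (1 - w - 1) = -w by ring] at hval
  rw [MellinConvergent, hswap, show (1 - w - 1) = -w by ring] at hconv
  rw [MeasureTheory.integrableOn_indicator_iff measurableSet_Ioi] at hconv
  refine ⟨by rwa [Set.inter_comm, hinteg] at hconv, ?_⟩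
  rw [hval]; congr 1; ring

/-! ### The smoothed sum of `Λ(n) log n` -/

/-- The point `σ + i k y` on the vertical line `Re s = σ`. -/
noncomputable def vline (k : ℕ) (σ y : ℝ) : ℂ := σ + k * y * Complex.I

/-- The Mellin kernel `N ^ s · Γ(1 + s / k)` at `s = σ + i k y`. -/
noncomputable def kernel (k : ℕ) (N σ y : ℝ) : ℂ :=
  (N : ℂ) ^ vline k σ y * Complex.Gamma ((1 + σ / k : ℝ) + y * Complex.I)

lemma vline_re (k : ℕ) (σ y : ℝ) : (vline k σ y).re = σ := by simp [vline]

lemma vline_im (k : ℕ) (σ y : ℝ) : (vline k σ y).im = k * y := by simp [vline]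

lemma continuous_vline (k : ℕ) (σ : ℝ) : Continuous (vline k σ) := by
  unfold vline; fun_prop

lemma one_add_div_mem {k : ℕ} (hk : 1 ≤ k) {σ : ℝ} (hσ : σ ∈ Set.Icc (0 : ℝ) 2) :
    (1 + σ / k : ℝ) ∈ Set.Icc (1 : ℝ) 3 := by
  have hk1 : (1 : ℝ) ≤ k := by exact_mod_cast hk
  have hk0 : (0 : ℝ) < k := by linarith
  refine ⟨by have := hσ.1; simp; positivity, ?_⟩
  have : σ / k ≤ 2 := by rw [div_le_iff₀ hk0]; nlinarith [hσ.2]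
  linarith

lemma norm_kernel {k : ℕ} {N σ y : ℝ} (hN : 0 < N) :
    ‖kernel k N σ y‖ = N ^ σ * ‖Complex.Gamma ((1 + σ / k : ℝ) + y * Complex.I)‖ := by
  rw [kernel, norm_mul, Complex.norm_cpow_eq_rpow_re_of_pos hN, vline_re]

lemma continuous_kernel {k : ℕ} (hk : 1 ≤ k) {N σ : ℝ} (hN : 0 < N)
    (hσ : σ ∈ Set.Icc (0 : ℝ) 2) : Continuous (kernel k N σ) := by
  unfold kernel
  refine Continuous.mul ?_ (continuous_Gamma_vertical ?_)
  · exact (continuous_vline k σ).const_cpow (Or.inl (by exact_mod_cast hN.ne'))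
  · linarith [(one_add_div_mem hk hσ).1]

lemma integrable_kernel {k : ℕ} (hk : 1 ≤ k) {N σ : ℝ} (hN : 0 < N)
    (hσ : σ ∈ Set.Icc (0 : ℝ) 2) : MeasureTheory.Integrable (kernel k N σ) := by
  refine ((integrable_Gamma_vertical (one_add_div_mem hk hσ)).norm.const_mul (N ^ σ)).mono'
    (continuous_kernel hk hN hσ).aestronglyMeasurable (Eventually.of_forall fun y => ?_)
  rw [norm_kernel hN]

lemma phi_div_eq {k : ℕ} (hk : 1 ≤ k) {N σ u : ℝ} (hN : 0 < N) (hu : 0 < u)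
    (hσ : σ ∈ Set.Icc (0 : ℝ) 2) :
    ((phi k (u / N) : ℝ) : ℂ) = (1 / (2 * Real.pi) : ℝ) *
      ∫ y : ℝ, (u : ℂ) ^ (-vline k σ y) * kernel k N σ y := by
  rw [phi_eq_integral hk hσ (div_pos hu hN)]
  congr 2
  ext y
  rw [kernel, ← mul_assoc]
  congr 1
  have hNc : (N : ℂ) ≠ 0 := by exact_mod_cast hN.ne'
  have huc : (u : ℂ) ≠ 0 := by exact_mod_cast hu.ne'
  have h : ((u / N : ℝ) : ℂ) ≠ 0 := by exact_mod_cast (div_pos hu hN).ne'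
  rw [Complex.cpow_def_of_ne_zero h, Complex.cpow_def_of_ne_zero huc,
    Complex.cpow_def_of_ne_zero hNc, ← Complex.exp_add, ← Complex.ofReal_log hu.le,
    ← Complex.ofReal_log hN.le, ← Complex.ofReal_log (div_pos hu hN).le,
    Real.log_div hu.ne' hN.ne']
  congr 1
  simp only [vline]
  push_cast
  ring

/-- The Dirichlet coefficients `Λ(n) log n`. -/
noncomputable def logVM : ℕ → ℂ := LSeries.logMul fun n => (ArithmeticFunction.vonMangoldt n : ℂ)

lemma logVM_summable {s : ℂ} (hs : 1 < s.re) : LSeriesSummable logVM s := by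
  apply LSeriesSummable_logMul_of_lt_re
  have : LSeries.abscissaOfAbsConv (fun n => (ArithmeticFunction.vonMangoldt n : ℂ)) ≤ 1 := by
    apply LSeries.abscissaOfAbsConv_le_of_forall_lt_LSeriesSummable
    intro y hy
    exact ArithmeticFunction.LSeriesSummable_vonMangoldt (by simpa using hy)
  refine this.trans_lt ?_
  exact_mod_cast hs

/-- The smoothed sum of `Λ(n) log n` as a vertical line integral of its Dirichlet series. -/
lemma hasSum_phi {k : ℕ} (hk : 1 ≤ k) {N σ : ℝ} (hN : 0 < N) (hσ : 1 < σ) (hσ2 : σ ≤ 2) :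
    HasSum (fun n : ℕ => ((ArithmeticFunction.vonMangoldt n * Real.log n * phi k (n / N) : ℝ) : ℂ))
      ((1 / (2 * Real.pi) : ℝ) * ∫ y : ℝ, LSeries logVM (vline k σ y) * kernel k N σ y) := by
  have hσ' : σ ∈ Set.Icc (0 : ℝ) 2 := ⟨by linarith, hσ2⟩
  set F : ℕ → ℝ → ℂ := fun n y => LSeries.term logVM (vline k σ y) n * kernel k N σ y with hF
  have hnorm : ∀ n y, ‖F n y‖ = ‖LSeries.term logVM (σ : ℂ) n‖ * ‖kernel k N σ y‖ := by
    intro n y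
    rw [hF]
    simp only [norm_mul, LSeries.norm_term_eq, vline_re, Complex.ofReal_re]
  have hcont : ∀ n, Continuous (F n) := by
    intro n
    refine Continuous.mul ?_ (continuous_kernel hk hN hσ')
    rcases eq_or_ne n 0 with rfl | hn
    · simp only [LSeries.term_zero]; exact continuous_const
    · simp only [LSeries.term_of_ne_zero hn]
      have hnc : (n : ℂ) ≠ 0 := by exact_mod_cast hn
      refine continuous_const.div ((continuous_vline k σ).const_cpow (Or.inl hnc)) fun y => ?_
      simp [Complex.cpow_eq_zero_iff, hnc]
  have hinteg : ∀ n, MeasureTheory.Integrable (F n) := by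
    intro n
    refine ((integrable_kernel hk hN hσ').norm.const_mul ‖LSeries.term logVM (σ : ℂ) n‖).mono'
      (hcont n).aestronglyMeasurable (Eventually.of_forall fun y => (hnorm n y).le)
  have hsum : Summable fun n => ∫ y, ‖F n y‖ := by
    simp only [hnorm, MeasureTheory.integral_const_mul]
    have : LSeriesSummable logVM (σ : ℂ) := logVM_summable (by simpa using hσ)
    exact this.norm.mul_right _
  have h := (MeasureTheory.hasSum_integral_of_summable_integral_norm hinteg hsum).mul_left
    ((1 / (2 * Real.pi) : ℝ) : ℂ)
  have hval : ∀ y, ∑' n, F n y = LSeries logVM (vline k σ y) * kernel k N σ y := by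
    intro y
    simp only [hF]
    rw [tsum_mul_right]
    rfl
  simp only [hval] at h
  have hfun : (fun n : ℕ =>
      ((ArithmeticFunction.vonMangoldt n * Real.log n * phi k (n / N) : ℝ) : ℂ)) =
      fun n => ((1 / (2 * Real.pi) : ℝ) : ℂ) * ∫ y, F n y := by
    ext n
    rcases eq_or_ne n 0 with rfl | hn
    · simp [hF]
    have hn0 : (0 : ℝ) < n := by positivity
    rw [Complex.ofReal_mul, phi_div_eq hk hN hn0 hσ', mul_left_comm,
      ← MeasureTheory.integral_const_mul]
    congr 2
    ext y
    simp only [hF]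
    rw [← mul_assoc, LSeries.term_of_ne_zero hn, Complex.cpow_neg, logVM, LSeries.logMul]
    push_cast
    ring
  rw [hfun]
  exact h

/-- The main term of the smoothed sum is the contribution of the double pole, written as the same
vertical line integral. -/
lemma integral_log_phi {k : ℕ} (hk : 1 ≤ k) {N σ : ℝ} (hN : 0 < N) (hσ : 1 < σ) (hσ2 : σ ≤ 2) :
    ((∫ x in Set.Ioi (1 : ℝ), Real.log x * phi k (x / N) : ℝ) : ℂ) =
      (1 / (2 * Real.pi) : ℝ) * ∫ y : ℝ, 1 / (vline k σ y - 1) ^ 2 * kernel k N σ y := by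
  have hσ' : σ ∈ Set.Icc (0 : ℝ) 2 := ⟨by linarith, hσ2⟩
  set f : ℝ → ℝ → ℂ := fun x y => (Real.log x : ℂ) * (x : ℂ) ^ (-vline k σ y) * kernel k N σ y
    with hf
  have h1 := (integral_log_mul_cpow (w := (σ : ℂ)) (by simpa using hσ)).1
  have hI : MeasureTheory.Integrable (Function.uncurry f)
      ((MeasureTheory.volume.restrict (Set.Ioi (1 : ℝ))).prod MeasureTheory.volume) := by
    refine (h1.norm.mul_prod (integrable_kernel hk hN hσ').norm).mono' ?_ ?_
    · apply Measurable.aestronglyMeasurable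
      have m1 : Measurable fun z : ℝ × ℝ => (Real.log z.1 : ℂ) := by fun_prop
      have m2 : Measurable fun z : ℝ × ℝ => (z.1 : ℂ) ^ (-vline k σ z.2) := by
        have := (continuous_vline k σ).measurable
        exact Measurable.pow (by fun_prop) (by fun_prop)
      have m3 : Measurable fun z : ℝ × ℝ => kernel k N σ z.2 :=
        (continuous_kernel hk hN hσ').measurable.comp measurable_snd
      exact (m1.mul m2).mul m3
    · have hmem : ∀ᵐ z : ℝ × ℝ ∂((MeasureTheory.volume.restrict (Set.Ioi (1 : ℝ))).prod
          (MeasureTheory.volume : MeasureTheory.Measure ℝ)), z.1 ∈ Set.Ioi (1 : ℝ) :=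
        MeasureTheory.Measure.quasiMeasurePreserving_fst.ae
          (MeasureTheory.ae_restrict_mem measurableSet_Ioi)
      filter_upwards [hmem] with z hz
      have hz0 : 0 < z.1 := lt_trans zero_lt_one hz
      simp only [Function.uncurry, hf, norm_mul]
      rw [Complex.norm_cpow_eq_rpow_re_of_pos hz0, Complex.norm_cpow_eq_rpow_re_of_pos hz0]
      simp [vline_re]
  have hs := MeasureTheory.integral_integral_swap hI
  have hL : (((∫ x in Set.Ioi (1 : ℝ), Real.log x * phi k (x / N) : ℝ)) : ℂ) =
      ∫ x in Set.Ioi (1 : ℝ), (1 / (2 * Real.pi) : ℝ) * ∫ y : ℝ, f x y := by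
    rw [← integral_complex_ofReal]
    refine MeasureTheory.setIntegral_congr_fun measurableSet_Ioi fun x hx => ?_
    have hx0 : 0 < x := lt_trans zero_lt_one hx
    rw [Complex.ofReal_mul, phi_div_eq hk hN hx0 hσ', mul_left_comm,
        ← MeasureTheory.integral_const_mul]
    simp only [hf, mul_assoc]
  rw [hL, MeasureTheory.integral_const_mul, hs]
  congr 2
  ext y
  simp only [hf]
  rw [MeasureTheory.integral_mul_const]
  congr 1
  exact (integral_log_mul_cpow (w := vline k σ y) (by rw [vline_re]; exact hσ)).2

/-- Smoothed prime number theorem for `Λ(n) log n`. On each line `Re s = σ > 1` the difference is the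
integral of the regular part `(ζ₁'/ζ₁)'`, which is `O(N^σ)` uniformly in `σ` because the decay of
`Γ` beats the polynomial growth; letting `σ → 1` gives `O(N)`. No contour is moved past
`Re s = 1`. -/
theorem smoothed_pnt {k : ℕ} (hk : 1 ≤ k) : ∃ C : ℝ, 0 < C ∧ ∀ N : ℝ, 0 < N →
    Summable (fun n : ℕ => ArithmeticFunction.vonMangoldt n * Real.log n * phi k (n / N)) ∧
    |∑' n : ℕ, ArithmeticFunction.vonMangoldt n * Real.log n * phi k (n / N) -
      ∫ x in Set.Ioi (1 : ℝ), Real.log x * phi k (x / N)| ≤ C * N := by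
  obtain ⟨C, hC, hCb⟩ := norm_deriv_logDeriv_le
  obtain ⟨K, hK, hKb⟩ := Gamma_decay 26
  have hk1 : (1 : ℝ) ≤ k := by exact_mod_cast hk
  set A : ℝ := 1 / (2 * Real.pi) * (C * k ^ 24 * K * ∫ y : ℝ, (1 + y ^ 2)⁻¹) with hA
  have hA0 : 0 ≤ A := by
    have : 0 ≤ ∫ y : ℝ, (1 + y ^ 2)⁻¹ := MeasureTheory.integral_nonneg fun y => by positivity
    positivity
  refine ⟨A + 1, by positivity, fun N hN => ?_⟩
  have hsummable : Summable
      (fun n : ℕ => ArithmeticFunction.vonMangoldt n * Real.log n * phi k (n / N)) := by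
    have := (hasSum_phi hk hN (σ := 2) (by norm_num) le_rfl).summable
    exact_mod_cast this
  refine ⟨hsummable, ?_⟩
  set D : ℝ := ∑' n : ℕ, ArithmeticFunction.vonMangoldt n * Real.log n * phi k (n / N) -
      ∫ x in Set.Ioi (1 : ℝ), Real.log x * phi k (x / N) with hD
  -- `D` does not depend on `σ`, and `A` is uniform in `σ`
  have key : ∀ σ : ℝ, 1 < σ → σ ≤ 2 → |D| ≤ A * N ^ σ := by
    intro σ hσ hσ2
    have hσ' : σ ∈ Set.Icc (0 : ℝ) 2 := ⟨by linarith, hσ2⟩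
    have e1 : ((∑' n : ℕ, ArithmeticFunction.vonMangoldt n * Real.log n * phi k (n / N) : ℝ) : ℂ)
        = _ := (Complex.hasSum_ofReal.2 hsummable.hasSum).unique (hasSum_phi hk hN hσ hσ2)
    have e2 := integral_log_phi hk hN hσ hσ2
    have hpt : ∀ y, LSeries logVM (vline k σ y) * kernel k N σ y =
        1 / (vline k σ y - 1) ^ 2 * kernel k N σ y +
        deriv (logDeriv riemannZeta₁) (vline k σ y) * kernel k N σ y := by
      intro y
      rw [logVM, LSeries_log_vonMangoldt (by rw [vline_re]; exact hσ), add_mul]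
    have hb : ∀ y, ‖deriv (logDeriv riemannZeta₁) (vline k σ y) * kernel k N σ y‖ ≤
        (N ^ σ * (C * k ^ 24 * K)) * (1 + y ^ 2)⁻¹ := by
      intro y
      rw [norm_mul, norm_kernel hN]
      have b1 := hCb (vline k σ y) (by rw [vline_re]; exact hσ.le) (by rw [vline_re]; exact hσ2)
      have b2 := hKb _ (one_add_div_mem hk hσ') y
      rw [vline_im, abs_mul, abs_of_nonneg (by positivity : (0 : ℝ) ≤ k)] at b1
      set g := ‖Complex.Gamma ((1 + σ / k : ℝ) + y * Complex.I)‖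
      have hg : 0 ≤ g := norm_nonneg _
      have b3 : (1 + k * |y|) ^ 24 ≤ (k * (1 + |y|)) ^ 24 := by
        gcongr; nlinarith [abs_nonneg y]
      have b4 : g * (1 + |y|) ^ 24 ≤ K * (1 + y ^ 2)⁻¹ := by
        rw [← div_eq_mul_inv, le_div_iff₀ (by positivity)]
        refine le_trans ?_ b2
        rw [mul_assoc, pow_add _ 24 2]
        gcongr
        nlinarith [abs_nonneg y, sq_abs y]
      calc _ ≤ (C * (k * (1 + |y|)) ^ 24) * (N ^ σ * g) := by
            gcongr
            exact b1.trans (by gcongr)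
        _ = N ^ σ * (C * k ^ 24) * (g * (1 + |y|) ^ 24) := by ring
        _ ≤ N ^ σ * (C * k ^ 24) * (K * (1 + y ^ 2)⁻¹) := by gcongr
        _ = _ := by ring
    have i2 : MeasureTheory.Integrable
        fun y => deriv (logDeriv riemannZeta₁) (vline k σ y) * kernel k N σ y := by
      refine (integrable_inv_one_add_sq.const_mul _).mono' ?_ (Eventually.of_forall hb)
      apply Measurable.aestronglyMeasurable
      exact ((measurable_deriv _).comp (continuous_vline k σ).measurable).mul
        (continuous_kernel hk hN hσ').measurable
    have i1 : MeasureTheory.Integrable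
        fun y => 1 / (vline k σ y - 1) ^ 2 * kernel k N σ y := by
      refine ((integrable_kernel hk hN hσ').norm.const_mul (1 / (σ - 1) ^ 2)).mono' ?_
        (Eventually.of_forall fun y => ?_)
      · apply Measurable.aestronglyMeasurable
        have := (continuous_vline k σ).measurable
        have := (continuous_kernel hk hN hσ').measurable
        fun_prop
      · rw [norm_mul, norm_div, norm_pow, norm_one]
        have h0 : σ - 1 ≤ ‖vline k σ y - 1‖ := by
          have := Complex.re_le_norm (vline k σ y - 1)
          simpa [vline_re] using this
        have h1 : 0 < σ - 1 := by linarith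
        gcongr
    have e3 : (D : ℂ) = (1 / (2 * Real.pi) : ℝ) *
        ∫ y : ℝ, deriv (logDeriv riemannZeta₁) (vline k σ y) * kernel k N σ y := by
      rw [hD, Complex.ofReal_sub, e1, e2, ← mul_sub]
      simp only [hpt]
      rw [MeasureTheory.integral_add i1 i2]
      ring
    have e4 : |D| = ‖(D : ℂ)‖ := by simp
    rw [e4, e3, norm_mul, Complex.norm_real, Real.norm_of_nonneg (by positivity)]
    have := MeasureTheory.norm_integral_le_of_norm_le (integrable_inv_one_add_sq.const_mul
      (N ^ σ * (C * k ^ 24 * K))) (Eventually.of_forall hb)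
    rw [MeasureTheory.integral_const_mul] at this
    calc _ ≤ 1 / (2 * Real.pi) * (N ^ σ * (C * k ^ 24 * K) * ∫ y : ℝ, (1 + y ^ 2)⁻¹) := by gcongr
      _ = _ := by rw [hA]; ring
  have hlim : Tendsto (fun σ : ℝ => A * N ^ σ) (nhdsWithin 1 (Set.Ioi 1)) (nhds (A * N ^ (1 : ℝ))) := by
    have : ContinuousAt (fun σ : ℝ => A * N ^ σ) 1 :=
      continuousAt_const.mul (Real.continuousAt_const_rpow hN.ne')
    exact this.tendsto.mono_left nhdsWithin_le_nhds
  have : |D| ≤ A * N ^ (1 : ℝ) := by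
    refine ge_of_tendsto hlim ?_
    filter_upwards [Ioc_mem_nhdsGT (show (1 : ℝ) < 2 by norm_num)] with σ hσ
    exact key σ hσ.1 hσ.2
  rw [Real.rpow_one] at this
  nlinarith

/-! ### Chebyshev bounds against the weight -/

lemma phi_nonneg (k : ℕ) {v : ℝ} (hv : 0 ≤ v) : 0 ≤ phi k v := by
  unfold phi; positivity

lemma phi_le_one (k : ℕ) (v : ℝ) : phi k v ≤ 1 := by
  unfold phi
  have h := Real.add_one_le_exp (v ^ k)
  rw [Real.exp_neg, ← div_eq_mul_inv, div_le_one (Real.exp_pos _)]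
  linarith

lemma continuous_phi (k : ℕ) : Continuous (phi k) := by unfold phi; fun_prop

/-- The decay of the weight, with room for two logarithms. -/
lemma log_sq_mul_phi_le {k : ℕ} (hk : 1 ≤ k) {v : ℝ} (hv : 0 < v) :
    (1 + |Real.log v|) ^ 2 * phi k v ≤ 240 * (1 + v ^ 2)⁻¹ := by
  rw [← div_eq_mul_inv, le_div_iff₀ (by positivity)]
  rcases le_total v 1 with h | h
  · have hs : 0 < √v := Real.sqrt_pos.2 hv
    have hs2 : √v ^ 2 = v := Real.sq_sqrt hv.le
    have h1 : 1 + |Real.log v| ≤ 2 / √v := by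
      rw [abs_of_nonpos (Real.log_nonpos hv.le h)]
      have := Real.log_le_sub_one_of_pos (inv_pos.2 hs)
      rw [Real.log_inv, Real.log_sqrt hv.le] at this
      rw [div_eq_mul_inv]
      linarith
    have h2 : (1 + |Real.log v|) ^ 2 * v ≤ 4 := by
      calc _ ≤ (2 / √v) ^ 2 * v := by gcongr
        _ = 4 := by rw [div_pow, hs2]; field_simp; norm_num
    have h3 : phi k v ≤ v := by
      unfold phi
      calc v ^ k * Real.exp (-v ^ k) ≤ v ^ 1 * 1 := by
            refine mul_le_mul (pow_le_pow_of_le_one hv.le h hk) ?_ (Real.exp_pos _).le (by positivity)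
            rw [Real.exp_le_one_iff, neg_nonpos]; positivity
        _ = v := by ring
    have h4 : (1 + |Real.log v|) ^ 2 * phi k v ≤ 4 := le_trans (by gcongr) h2
    have h5 : 1 + v ^ 2 ≤ 2 := by nlinarith
    have := phi_nonneg k hv.le
    calc _ ≤ (4 : ℝ) * 2 := by gcongr
      _ ≤ _ := by norm_num
  · have h1 : 1 + |Real.log v| ≤ v := by
      rw [abs_of_nonneg (Real.log_nonneg h)]
      linarith [Real.log_le_sub_one_of_pos hv]
    unfold phi
    set u := v ^ k with hu
    have huv : v ≤ u := le_self_pow₀ h (by omega)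
    have hu1 : 1 ≤ u := h.trans huv
    have he := Real.pow_div_factorial_le_exp u (by linarith) 5
    have he' : u ^ 5 * Real.exp (-u) ≤ 120 := by
      rw [Real.exp_neg, ← div_eq_mul_inv, div_le_iff₀ (Real.exp_pos _)]
      rw [div_le_iff₀ (by positivity)] at he
      norm_num [Nat.factorial] at he
      linarith
    calc (1 + |Real.log v|) ^ 2 * (u * Real.exp (-u)) * (1 + v ^ 2)
        ≤ u ^ 2 * (u * Real.exp (-u)) * (2 * u ^ 2) := by
          gcongr
          · exact h1.trans huv
          · nlinarith
      _ = 2 * (u ^ 5 * Real.exp (-u)) := by ring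
      _ ≤ 240 := by linarith

/-- Dyadic summation: linear growth of the partial sums of `a` at scale `N` makes `a`
summable against `1 / (1 + (n / N) ^ 2)`. -/
lemma dyadic {a : ℕ → ℝ} (ha : ∀ n, 0 ≤ a n) {N B : ℝ} (hN : 0 < N)
    (hB : ∀ i : ℕ, ∑ n ∈ Finset.Ioc 0 ⌊2 ^ (i + 1) * N⌋₊, a n ≤ B * 2 ^ i) (ha0 : a 0 = 0) :
    Summable (fun n : ℕ => a n * (1 + (n / N) ^ 2)⁻¹) ∧
      ∑' n : ℕ, a n * (1 + (n / N) ^ 2)⁻¹ ≤ 2 * B := by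
  have hB0 : 0 ≤ B := by
    have := (Finset.sum_nonneg fun n _ => ha n).trans (hB 0)
    simpa using this
  have hpos : ∀ n : ℕ, 0 ≤ a n * (1 + (n / N) ^ 2)⁻¹ := fun n => mul_nonneg (ha n) (by positivity)
  have hex : ∀ v : ℝ, ∃ i : ℕ, v ≤ 2 ^ (i + 1) ∧ (1 + v ^ 2)⁻¹ ≤ (1 / 4 : ℝ) ^ i := by
    intro v
    rcases le_total v 1 with h | h
    · refine ⟨0, by norm_num; linarith, ?_⟩
      simpa using inv_le_one_of_one_le₀ (by nlinarith : 1 ≤ 1 + v ^ 2)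
    · obtain ⟨i, h1, h2⟩ := exists_nat_pow_near h (one_lt_two)
      refine ⟨i, h2.le, ?_⟩
      rw [one_div, inv_pow]
      gcongr
      calc (4 : ℝ) ^ i = (2 ^ i) ^ 2 := by rw [← pow_mul, mul_comm, pow_mul]; norm_num
        _ ≤ v ^ 2 := by gcongr
        _ ≤ _ := by linarith
  choose ix hix1 hix2 using hex
  have hfin : ∀ s : Finset ℕ, ∑ n ∈ s, a n * (1 + (n / N) ^ 2)⁻¹ ≤ 2 * B := by
    intro s
    set M := s.sup (fun n : ℕ => ix (n / N)) + 1 with hM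
    have step : ∀ n ∈ s, a n * (1 + (n / N) ^ 2)⁻¹ ≤
        ∑ i ∈ Finset.range M, (1 / 4 : ℝ) ^ i *
          (if n ∈ Finset.Ioc 0 ⌊2 ^ (i + 1) * N⌋₊ then a n else 0) := by
      intro n hn
      have hterm : ∀ i ∈ Finset.range M, 0 ≤ (1 / 4 : ℝ) ^ i *
          (if n ∈ Finset.Ioc 0 ⌊2 ^ (i + 1) * N⌋₊ then a n else 0) := by
        intro i _
        have := ha n
        split_ifs <;> positivity
      rcases Nat.eq_zero_or_pos n with rfl | hn0
      · rw [ha0, zero_mul]; exact Finset.sum_nonneg (by simp)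
      have hmem : ix (n / N) ∈ Finset.range M := by
        rw [Finset.mem_range, hM]
        exact Nat.lt_succ_of_le (Finset.le_sup (f := fun n : ℕ => ix (n / N)) hn)
      refine le_trans ?_ (Finset.single_le_sum hterm hmem)
      rw [if_pos, mul_comm]
      · exact mul_le_mul_of_nonneg_right (hix2 _) (ha n)
      · rw [Finset.mem_Ioc]
        refine ⟨hn0, Nat.le_floor ?_⟩
        have := hix1 (n / N)
        rwa [div_le_iff₀ hN] at this
    calc _ ≤ ∑ n ∈ s, ∑ i ∈ Finset.range M, (1 / 4 : ℝ) ^ i *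
          (if n ∈ Finset.Ioc 0 ⌊2 ^ (i + 1) * N⌋₊ then a n else 0) := Finset.sum_le_sum step
      _ = ∑ i ∈ Finset.range M, (1 / 4 : ℝ) ^ i * ∑ n ∈ s,
          (if n ∈ Finset.Ioc 0 ⌊2 ^ (i + 1) * N⌋₊ then a n else 0) := by
          rw [Finset.sum_comm]; simp only [Finset.mul_sum]
      _ ≤ ∑ i ∈ Finset.range M, (1 / 4 : ℝ) ^ i * (B * 2 ^ i) := by
          gcongr with i _
          refine le_trans ?_ (hB i)
          rw [← Finset.sum_filter]
          refine Finset.sum_le_sum_of_subset_of_nonneg ?_ fun n _ _ => ha n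
          intro n hn
          exact (Finset.mem_filter.1 hn).2
      _ = B * ∑ i ∈ Finset.range M, (1 / 2 : ℝ) ^ i := by
          rw [Finset.mul_sum]
          refine Finset.sum_congr rfl fun i _ => ?_
          rw [mul_left_comm, ← mul_pow]; norm_num
      _ ≤ B * 2 := by
          gcongr
          exact sum_geometric_two_le M
      _ = 2 * B := by ring
  exact ⟨summable_of_sum_le hpos hfin, Real.tsum_le_of_sum_le hpos hfin⟩

/-- Indicator of the primes. -/
noncomputable def primeInd (n : ℕ) : ℝ := if n.Prime then 1 else 0

lemma primeInd_nonneg (n : ℕ) : 0 ≤ primeInd n := by unfold primeInd; split_ifs <;> norm_num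

/-- Chebyshev's upper bound for `π`, in the form needed by `dyadic`. -/
lemma primeInd_dyadic {N : ℝ} (hN : 2 ≤ N) (i : ℕ) :
    ∑ n ∈ Finset.Ioc 0 ⌊2 ^ (i + 1) * N⌋₊, primeInd n ≤ 12 * N / Real.log N * 2 ^ i := by
  set x : ℝ := 2 ^ (i + 1) * N with hx
  have h2 : (1 : ℝ) ≤ 2 ^ (i + 1) := one_le_pow₀ (by norm_num)
  have hNx : N ≤ x := by rw [hx]; nlinarith
  have hx1 : 1 < x := by linarith
  have hx0 : 0 < x := by linarith
  have hlogN : 0 < Real.log N := Real.log_pos (by linarith)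
  have hlogx : Real.log N ≤ Real.log x := Real.log_le_log (by linarith) hNx
  have hcard : ∑ n ∈ Finset.Ioc 0 ⌊x⌋₊, primeInd n = (⌊x⌋₊.primeCounting : ℝ) := by
    unfold primeInd
    rw [Finset.sum_boole, Nat.primeCounting, Nat.primeCounting', Nat.count_eq_card_filter_range]
    congr 2
    ext n
    simp only [Finset.mem_filter, Finset.mem_Ioc, Finset.mem_range]
    constructor
    · rintro ⟨⟨_, h⟩, hp⟩; exact ⟨by omega, hp⟩
    · rintro ⟨h, hp⟩; exact ⟨⟨hp.pos, by omega⟩, hp⟩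
  rw [hcard]
  refine (Chebyshev.pi_le_log4_mul_div hx1).trans ?_
  rw [Real.log_sqrt hx0.le]
  have hl4 : Real.log 4 ≤ 2 := by
    have := Real.log_le_sub_one_of_pos (show (0 : ℝ) < 2 by norm_num)
    rw [show (4 : ℝ) = 2 ^ 2 by norm_num, Real.log_pow]; push_cast; linarith
  have hs : √x ≤ 2 * x / Real.log x := by
    rw [le_div_iff₀ (by linarith)]
    have h1 := Real.log_le_sub_one_of_pos (Real.sqrt_pos.2 hx0)
    rw [Real.log_sqrt hx0.le] at h1
    nlinarith [Real.sq_sqrt hx0.le, Real.sqrt_nonneg x]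
  calc Real.log 4 * x / (Real.log x / 2) + √x ≤ 2 * x / (Real.log x / 2) + 2 * x / Real.log x := by
        have : 0 < Real.log x := by linarith
        gcongr
    _ = 6 * x / Real.log x := by field_simp; ring
    _ ≤ 6 * x / Real.log N := by gcongr
    _ = _ := by rw [hx]; ring

/-- The von Mangoldt function restricted to the proper prime powers. -/
noncomputable def vmNP (n : ℕ) : ℝ := if n.Prime then 0 else ArithmeticFunction.vonMangoldt n

lemma vmNP_nonneg (n : ℕ) : 0 ≤ vmNP n := by
  unfold vmNP; split_ifs
  · exact le_rfl
  · exact ArithmeticFunction.vonMangoldt_nonneg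

/-- The bound `ψ(x) - θ(x) = O(√x)`, in the form needed by `dyadic`. -/
lemma vmNP_dyadic : ∃ C : ℝ, 0 < C ∧ ∀ N : ℝ, 0 < N → ∀ i : ℕ,
    ∑ n ∈ Finset.Ioc 0 ⌊2 ^ (i + 1) * N⌋₊, vmNP n ≤ C * √N * 2 ^ i := by
  obtain ⟨C, hC⟩ := Chebyshev.psi_sub_theta_le_mul_sqrt
  refine ⟨2 * max C 1, by positivity, fun N hN i => ?_⟩
  have h := hC (2 ^ (i + 1) * N)
  rw [Chebyshev.psi_sub_theta_eq_sum_not_prime, Finset.sum_filter] at h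
  have heq : ∑ n ∈ Finset.Ioc 0 ⌊2 ^ (i + 1) * N⌋₊, vmNP n = ∑ n ∈ Finset.Ioc 0 ⌊2 ^ (i + 1) * N⌋₊,
      if ¬ n.Prime then ArithmeticFunction.vonMangoldt n else 0 := by
    refine Finset.sum_congr rfl fun n _ => ?_
    unfold vmNP
    split_ifs <;> rfl
  rw [heq]
  refine h.trans ?_
  have hs : √(2 ^ (i + 1) * N) ≤ 2 ^ (i + 1) * √N := by
    rw [Real.sqrt_mul (by positivity)]
    gcongr
    rw [Real.sqrt_le_left (by positivity)]
    have : (1 : ℝ) ≤ 2 ^ (i + 1) := one_le_pow₀ (by norm_num)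
    nlinarith
  calc C * √(2 ^ (i + 1) * N) ≤ max C 1 * (2 ^ (i + 1) * √N) := by
        gcongr; exact le_max_left _ _
    _ = _ := by ring

/-! ### The smoothed sum over primes -/

/-- The smoothed prime counting function `∑_p φ(p / N)`. -/
noncomputable def Qsum (k : ℕ) (N : ℝ) : ℝ := ∑' n : ℕ, primeInd n * phi k (n / N)

/-- The total mass `∫₀^∞ φ` of the weight, in closed form (see `integral_phi`). -/
noncomputable def phiMass (k : ℕ) : ℝ := 1 / k * Real.Gamma ((k + 1) / k)

lemma integral_phi {k : ℕ} (hk : 1 ≤ k) : ∫ v in Set.Ioi (0 : ℝ), phi k v = phiMass k := by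
  have hk0 : (0 : ℝ) < k := by exact_mod_cast hk
  have h := integral_rpow_mul_exp_neg_rpow (p := k) (q := k) hk0 (by linarith)
  simp only [Real.rpow_natCast] at h
  exact h

lemma integrableOn_log_phi {k : ℕ} (hk : 1 ≤ k) :
    MeasureTheory.IntegrableOn (fun v : ℝ => Real.log v * phi k v) (Set.Ioi 0) := by
  refine (integrable_inv_one_add_sq.const_mul 240).integrableOn.mono' ?_ ?_
  · exact (Real.measurable_log.mul (continuous_phi k).measurable).aestronglyMeasurable
  · refine (MeasureTheory.ae_restrict_mem measurableSet_Ioi).mono fun v hv => ?_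
    have h0 := phi_nonneg k (le_of_lt (Set.mem_Ioi.1 hv))
    rw [norm_mul, Real.norm_eq_abs, Real.norm_of_nonneg h0]
    refine le_trans ?_ (log_sq_mul_phi_le hk hv)
    gcongr
    nlinarith [abs_nonneg (Real.log v)]

lemma integrableOn_phi {k : ℕ} (hk : 1 ≤ k) :
    MeasureTheory.IntegrableOn (phi k) (Set.Ioi 0) := by
  refine (integrable_inv_one_add_sq.const_mul 240).integrableOn.mono' ?_ ?_
  · exact (continuous_phi k).aestronglyMeasurable
  · refine (MeasureTheory.ae_restrict_mem measurableSet_Ioi).mono fun v hv => ?_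
    have h0 := phi_nonneg k (le_of_lt (Set.mem_Ioi.1 hv))
    rw [Real.norm_of_nonneg h0]
    refine le_trans ?_ (log_sq_mul_phi_le hk hv)
    refine le_mul_of_one_le_left h0 ?_
    nlinarith [abs_nonneg (Real.log v)]

/-- Substituting `x = N v` turns `log x` into `log N + log v`; the second part and the missing range
`v ≤ 1 / N` are absorbed into the error. -/
lemma integral_log_phi_asymp {k : ℕ} (hk : 1 ≤ k) : ∃ C : ℝ, 0 < C ∧ ∀ N : ℝ, 1 ≤ N →
    |(∫ x in Set.Ioi (1 : ℝ), Real.log x * phi k (x / N)) - phiMass k * N * Real.log N| ≤ C * N := by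
  set A := ∫ v in Set.Ioi (0 : ℝ), ‖Real.log v * phi k v‖ with hA
  have hA0 : 0 ≤ A := MeasureTheory.integral_nonneg fun v => norm_nonneg _
  refine ⟨A + 1, by positivity, fun N hN => ?_⟩
  have hN0 : 0 < N := by linarith
  have hlog : 0 ≤ Real.log N := Real.log_nonneg hN
  have hsub : Set.Ioi (1 / N) ⊆ Set.Ioi (0 : ℝ) := Set.Ioi_subset_Ioi (by positivity)
  have e1 : ∫ x in Set.Ioi (1 : ℝ), Real.log x * phi k (x / N) =
      N * ∫ v in Set.Ioi (1 / N), (Real.log N * phi k v + Real.log v * phi k v) := by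
    have h := MeasureTheory.integral_comp_mul_left_Ioi
      (fun v => Real.log N * phi k v + Real.log v * phi k v) 1 (inv_pos.2 hN0)
    rw [inv_inv, mul_one, smul_eq_mul, inv_eq_one_div] at h
    rw [← h]
    refine MeasureTheory.setIntegral_congr_fun measurableSet_Ioi fun x hx => ?_
    have hx0 : 0 < x := lt_trans zero_lt_one hx
    have : 1 / N * x = x / N := by ring
    simp only [this]
    rw [Real.log_div hx0.ne' hN0.ne']
    ring
  have e2 : ∫ v in Set.Ioi (1 / N), (Real.log N * phi k v + Real.log v * phi k v) =
      Real.log N * (∫ v in Set.Ioi (1 / N), phi k v) +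
        ∫ v in Set.Ioi (1 / N), Real.log v * phi k v := by
    rw [MeasureTheory.integral_add (((integrableOn_phi hk).mono_set hsub).const_mul _)
      ((integrableOn_log_phi hk).mono_set hsub), MeasureTheory.integral_const_mul]
  have e3 : phiMass k = (∫ v in Set.Ioc 0 (1 / N), phi k v) + ∫ v in Set.Ioi (1 / N), phi k v := by
    rw [← integral_phi hk, ← MeasureTheory.setIntegral_union (f := phi k)
      (μ := MeasureTheory.volume) (Set.Ioc_disjoint_Ioi (le_refl (1 / N)))
      measurableSet_Ioi ((integrableOn_phi hk).mono_set Set.Ioc_subset_Ioi_self)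
      ((integrableOn_phi hk).mono_set hsub), Set.Ioc_union_Ioi_eq_Ioi (by positivity)]
  have b1 : |∫ v in Set.Ioi (1 / N), Real.log v * phi k v| ≤ A := by
    rw [← Real.norm_eq_abs]
    refine (MeasureTheory.norm_integral_le_integral_norm _).trans ?_
    exact MeasureTheory.setIntegral_mono_set (integrableOn_log_phi hk).norm
      (Eventually.of_forall fun v => norm_nonneg _) hsub.eventuallyLE
  have b2 : |∫ v in Set.Ioc 0 (1 / N), phi k v| ≤ 1 / N := by
    have := MeasureTheory.norm_setIntegral_le_of_norm_le_const (C := 1) (f := phi k)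
      (s := Set.Ioc 0 (1 / N)) (μ := MeasureTheory.volume) (by simp) (fun v hv => by
        rw [Real.norm_of_nonneg (phi_nonneg k hv.1.le)]; exact phi_le_one k v)
    simpa [hN0.le] using this
  have b3 : Real.log N * (1 / N) ≤ 1 := by
    rw [mul_one_div, div_le_one hN0]; linarith [Real.log_le_sub_one_of_pos hN0]
  rw [e1, e2, e3]
  have : N * (Real.log N * (∫ v in Set.Ioi (1 / N), phi k v) +
        ∫ v in Set.Ioi (1 / N), Real.log v * phi k v) -
      ((∫ v in Set.Ioc 0 (1 / N), phi k v) + ∫ v in Set.Ioi (1 / N), phi k v) * N * Real.log N =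
      N * ((∫ v in Set.Ioi (1 / N), Real.log v * phi k v) -
        Real.log N * ∫ v in Set.Ioc 0 (1 / N), phi k v) := by ring
  rw [this, abs_mul, abs_of_pos hN0, mul_comm]
  gcongr
  refine (abs_sub _ _).trans ?_
  rw [abs_mul, abs_of_nonneg hlog]
  have : Real.log N * |∫ v in Set.Ioc 0 (1 / N), phi k v| ≤ Real.log N * (1 / N) := by gcongr
  linarith

/-- The prime number theorem with a smooth weight, for the scales `N ≥ 2`. The weight concentrates
at `n ≈ N`, so `Λ(n) log n` may be replaced by `log² N` on the primes, at the cost of terms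
controlled by Chebyshev bounds. -/
lemma Qsum_asymp_large {k : ℕ} (hk : 1 ≤ k) : ∃ C : ℝ, 0 < C ∧ ∀ N : ℝ, 2 ≤ N →
    Summable (fun n : ℕ => primeInd n * phi k (n / N)) ∧
    Qsum k N ≤ C * N / Real.log N ∧
    |Real.log N * Qsum k N - phiMass k * N| ≤ C * N / Real.log N := by
  obtain ⟨C1, hC1, h1⟩ := smoothed_pnt hk
  obtain ⟨C2, hC2, h2⟩ := integral_log_phi_asymp hk
  obtain ⟨C3, hC3, h3⟩ := vmNP_dyadic
  refine ⟨C1 + C2 + 480 * 12 * 4 + 480 * C3 * 2, by positivity, fun N hN => ?_⟩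
  have hN0 : 0 < N := by linarith
  set ℓ := Real.log N with hℓ
  have hℓ2 : 1 / 2 ≤ ℓ := by
    have h := Real.log_two_gt_d9
    have : Real.log 2 ≤ ℓ := Real.log_le_log (by norm_num) hN
    linarith
  have hℓ0 : 0 < ℓ := by linarith
  obtain ⟨hT, hTb⟩ := h1 N hN0
  have hI := h2 N (by linarith)
  set T := ∑' n : ℕ, ArithmeticFunction.vonMangoldt n * Real.log n * phi k (n / N) with hTdef
  -- weighted sums over the primes and over the proper prime powers
  obtain ⟨s1, t1⟩ := dyadic primeInd_nonneg hN0 (primeInd_dyadic hN) (by simp [primeInd, Nat.not_prime_zero])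
  obtain ⟨s2, t2⟩ := dyadic vmNP_nonneg hN0 (h3 N hN0) (by simp [vmNP])
  have hphi : ∀ n : ℕ, 0 ≤ phi k (n / N) := fun n => phi_nonneg k (by positivity)
  have hle : ∀ n : ℕ, 0 < n →
      (1 + |Real.log (n / N)|) ^ 2 * phi k (n / N) ≤ 240 * (1 + (n / N) ^ 2)⁻¹ :=
    fun n hn => log_sq_mul_phi_le hk (by positivity)
  have hP0 : ∀ n : ℕ, ‖primeInd n * phi k (n / N)‖ ≤ 240 * (primeInd n * (1 + (n / N) ^ 2)⁻¹) := by
    intro n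
    rw [Real.norm_of_nonneg (mul_nonneg (primeInd_nonneg n) (hphi n))]
    rcases Nat.eq_zero_or_pos n with rfl | hn
    · simp [primeInd, Nat.not_prime_zero]
    rw [mul_left_comm]
    refine mul_le_mul_of_nonneg_left ((le_mul_of_one_le_left (hphi n) ?_).trans (hle n hn))
      (primeInd_nonneg n)
    nlinarith [abs_nonneg (Real.log (n / N))]
  have hsQ : Summable (fun n : ℕ => primeInd n * phi k (n / N)) :=
    Summable.of_norm_bounded (s1.mul_left 240) hP0
  have hQle : Qsum k N ≤ 480 * (12 * N / ℓ) := by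
    have := hsQ.tsum_le_tsum (fun n => (le_abs_self _).trans (hP0 n)) (s1.mul_left 240)
    rw [tsum_mul_left] at this
    rw [Qsum]; linarith
  have hdiff : ∀ n : ℕ, |ℓ ^ 2 * (primeInd n * phi k (n / N)) -
      ArithmeticFunction.vonMangoldt n * Real.log n * phi k (n / N)| ≤
      (2 * ℓ + 1) * 240 * (primeInd n * (1 + (n / N) ^ 2)⁻¹) +
      (ℓ + 1) * 240 * (vmNP n * (1 + (n / N) ^ 2)⁻¹) := by
    intro n
    rcases Nat.eq_zero_or_pos n with rfl | hn
    · simp [primeInd, vmNP, Nat.not_prime_zero]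
    have hn0 : (0 : ℝ) < n := by exact_mod_cast hn
    set a := Real.log (n / N) with ha
    have hlogn : Real.log n = ℓ + a := by
      rw [ha, Real.log_div hn0.ne' hN0.ne']; ring
    have hlen := hle n hn
    have hph := hphi n
    have ha0 := abs_nonneg a
    by_cases hp : n.Prime
    · have q1 : |ℓ ^ 2 - (ℓ + a) ^ 2| ≤ (2 * ℓ + 1) * (1 + |a|) ^ 2 := by
        rw [show ℓ ^ 2 - (ℓ + a) ^ 2 = -(a * (2 * ℓ + a)) by ring, abs_neg, abs_mul]
        have h5 : |2 * ℓ + a| ≤ 2 * ℓ + |a| := (abs_add_le _ _).trans (by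
          rw [abs_of_pos (by linarith : 0 < 2 * ℓ)])
        calc |a| * |2 * ℓ + a| ≤ |a| * (2 * ℓ + |a|) := by gcongr
          _ ≤ (2 * ℓ + 1) * (1 + |a|) ^ 2 := by
            nlinarith [mul_nonneg hℓ0.le ha0, mul_nonneg hℓ0.le (sq_nonneg |a|)]
      simp only [primeInd, vmNP, if_pos hp, ArithmeticFunction.vonMangoldt_apply_prime hp, one_mul,
        zero_mul, mul_zero, add_zero]
      rw [hlogn, ← sq, ← sub_mul, abs_mul, abs_of_nonneg hph]
      calc _ ≤ (2 * ℓ + 1) * (1 + |a|) ^ 2 * phi k (n / N) := by gcongr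
        _ = (2 * ℓ + 1) * ((1 + |a|) ^ 2 * phi k (n / N)) := by ring
        _ ≤ (2 * ℓ + 1) * (240 * (1 + (n / N) ^ 2)⁻¹) := by gcongr
        _ = _ := by ring
    · have q1 : |ℓ + a| ≤ (ℓ + 1) * (1 + |a|) ^ 2 := by
        have : |ℓ + a| ≤ ℓ + |a| := (abs_add_le _ _).trans (by rw [abs_of_pos hℓ0])
        nlinarith [mul_nonneg hℓ0.le ha0, mul_nonneg hℓ0.le (sq_nonneg |a|), sq_nonneg |a|]
      simp only [primeInd, vmNP, if_neg hp, zero_mul, mul_zero, zero_sub, zero_add]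
      have hΛ : 0 ≤ ArithmeticFunction.vonMangoldt n := ArithmeticFunction.vonMangoldt_nonneg
      rw [hlogn, abs_neg, abs_mul, abs_mul, abs_of_nonneg hph, abs_of_nonneg hΛ]
      calc _ ≤ ArithmeticFunction.vonMangoldt n * ((ℓ + 1) * (1 + |a|) ^ 2) * phi k (n / N) := by
            gcongr
        _ = ArithmeticFunction.vonMangoldt n * (ℓ + 1) * ((1 + |a|) ^ 2 * phi k (n / N)) := by ring
        _ ≤ ArithmeticFunction.vonMangoldt n * (ℓ + 1) * (240 * (1 + (n / N) ^ 2)⁻¹) := by gcongr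
        _ = _ := by ring
  have hD : |ℓ ^ 2 * Qsum k N - T| ≤ (2 * ℓ + 1) * 240 * (2 * (12 * N / ℓ)) +
      (ℓ + 1) * 240 * (2 * (C3 * √N)) := by
    have hS := ((s1.mul_left ((2 * ℓ + 1) * 240)).add (s2.mul_left ((ℓ + 1) * 240)))
    have e : ℓ ^ 2 * Qsum k N - T = ∑' n : ℕ, (ℓ ^ 2 * (primeInd n * phi k (n / N)) -
      ArithmeticFunction.vonMangoldt n * Real.log n * phi k (n / N)) := by
      rw [(hsQ.mul_left _).tsum_sub hT, tsum_mul_left]; rfl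
    rw [e]
    have := tsum_of_norm_bounded hS.hasSum
      (fun n => (Real.norm_eq_abs _).trans_le (hdiff n))
    refine this.trans ?_
    rw [(s1.mul_left _).tsum_add (s2.mul_left _), tsum_mul_left, tsum_mul_left]
    gcongr
  have hsq : ℓ + 1 ≤ 2 * √N := by
    have h := Real.log_le_sub_one_of_pos (Real.sqrt_pos.2 hN0)
    rw [Real.log_sqrt hN0.le] at h
    linarith
  have hD2 : |ℓ ^ 2 * Qsum k N - T| ≤ (480 * 12 * 4 + 480 * C3 * 2) * N := by
    refine hD.trans ?_
    have q1 : (2 * ℓ + 1) * 240 * (2 * (12 * N / ℓ)) ≤ 480 * 12 * 4 * N := by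
      have : (2 * ℓ + 1) / ℓ ≤ 4 := by rw [div_le_iff₀ hℓ0]; linarith
      calc _ = 480 * 12 * N * ((2 * ℓ + 1) / ℓ) := by ring
        _ ≤ 480 * 12 * N * 4 := by gcongr
        _ = _ := by ring
    have q2 : (ℓ + 1) * 240 * (2 * (C3 * √N)) ≤ 480 * C3 * 2 * N := by
      calc _ ≤ (2 * √N) * 240 * (2 * (C3 * √N)) := by gcongr
        _ = 480 * C3 * 2 * (√N * √N) := by ring
        _ = _ := by rw [Real.mul_self_sqrt hN0.le]
    linarith
  refine ⟨hsQ, hQle.trans ?_, ?_⟩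
  · rw [← mul_div_assoc]
    have : 0 < C1 + C2 + 480 * C3 * 2 := by positivity
    refine div_le_div_of_nonneg_right ?_ hℓ0.le
    nlinarith
  · have htri : |ℓ ^ 2 * Qsum k N - phiMass k * N * ℓ| ≤
        (C1 + C2 + 480 * 12 * 4 + 480 * C3 * 2) * N := by
      have := abs_sub_le (ℓ ^ 2 * Qsum k N) T (phiMass k * N * ℓ)
      have := abs_sub_le T (∫ x in Set.Ioi (1 : ℝ), Real.log x * phi k (x / N)) (phiMass k * N * ℓ)
      linarith
    rw [le_div_iff₀ hℓ0]
    calc _ = |(ℓ * Qsum k N - phiMass k * N) * ℓ| := by rw [abs_mul, abs_of_pos hℓ0]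
      _ = |ℓ ^ 2 * Qsum k N - phiMass k * N * ℓ| := by congr 1; ring
      _ ≤ _ := htri

lemma phiMass_pos {k : ℕ} (hk : 1 ≤ k) : 0 < phiMass k := by
  have hk0 : (0 : ℝ) < k := by exact_mod_cast hk
  have := Real.Gamma_pos_of_pos (show 0 < ((k : ℝ) + 1) / k by positivity)
  unfold phiMass; positivity

/-- The smoothed prime number theorem at every scale `N > 0`. The denominators `1 + log⁺ N` make the
statement uniform, as is needed for scales `(y / j)^(1/k)` with `j` unbounded. -/
theorem Qsum_asymp {k : ℕ} (hk : 1 ≤ k) : ∃ C : ℝ, 0 < C ∧ ∀ N : ℝ, 0 < N →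
    Summable (fun n : ℕ => primeInd n * phi k (n / N)) ∧
    Qsum k N ≤ C * N / (1 + max 0 (Real.log N)) ∧
    |Real.log N * Qsum k N - phiMass k * N| ≤ C * N / (1 + max 0 (Real.log N)) := by
  obtain ⟨C1, hC1, h1⟩ := Qsum_asymp_large hk
  have hc0 := phiMass_pos hk
  set Z := ∑' n : ℕ, 1 / (n : ℝ) ^ 2 with hZ
  have hZs : Summable fun n : ℕ => 1 / (n : ℝ) ^ 2 := Real.summable_one_div_nat_pow.2 (by norm_num)
  have hZ0 : 0 ≤ Z := tsum_nonneg fun n => by positivity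
  refine ⟨3 * C1 + 2 * (480 * Z + phiMass k), by positivity, fun N hN => ?_⟩
  rcases le_or_gt 2 N with h2 | h2
  · obtain ⟨ha, hb, hc⟩ := h1 N h2
    have hℓ2 : 1 / 2 ≤ Real.log N := by
      have h := Real.log_two_gt_d9
      have : Real.log 2 ≤ Real.log N := Real.log_le_log (by norm_num) h2
      linarith
    have hle : C1 * N / Real.log N ≤
        (3 * C1 + 2 * (480 * Z + phiMass k)) * N / (1 + max 0 (Real.log N)) := by
      rw [max_eq_right (by linarith), div_le_div_iff₀ (by linarith) (by linarith)]
      have : C1 * N * (1 + Real.log N) ≤ C1 * N * (3 * Real.log N) := by gcongr; linarith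
      have : 0 ≤ 2 * (480 * Z + phiMass k) * N * Real.log N := by positivity
      nlinarith
    exact ⟨ha, hb.trans hle, hc.trans hle⟩
  · have hb : ∀ n : ℕ, ‖primeInd n * phi k (n / N)‖ ≤ 240 * N ^ 2 * (1 / (n : ℝ) ^ 2) := by
      intro n
      have hph := phi_nonneg k (show (0 : ℝ) ≤ n / N by positivity)
      rw [Real.norm_of_nonneg (mul_nonneg (primeInd_nonneg n) hph)]
      rcases Nat.eq_zero_or_pos n with rfl | hn
      · simp [primeInd, Nat.not_prime_zero]
      have hn0 : (0 : ℝ) < n := by exact_mod_cast hn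
      have h1 := log_sq_mul_phi_le hk (show (0 : ℝ) < n / N by positivity)
      have hpi : primeInd n ≤ 1 := by unfold primeInd; split_ifs <;> norm_num
      calc _ ≤ (1 + |Real.log (n / N)|) ^ 2 * phi k (n / N) := by
            refine mul_le_mul_of_nonneg_right (hpi.trans ?_) hph
            nlinarith [abs_nonneg (Real.log (n / N))]
        _ ≤ 240 * (1 + (n / N) ^ 2)⁻¹ := h1
        _ ≤ 240 * ((n / N) ^ 2)⁻¹ := by gcongr; linarith
        _ = _ := by rw [div_pow, inv_div]; ring
    have hs : Summable (fun n : ℕ => primeInd n * phi k (n / N)) :=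
      Summable.of_norm_bounded (hZs.mul_left _) hb
    have hQ : Qsum k N ≤ 240 * N ^ 2 * Z := by
      have := hs.tsum_le_tsum (fun n => (le_abs_self _).trans (hb n)) (hZs.mul_left _)
      rwa [tsum_mul_left] at this
    have hQ0 : 0 ≤ Qsum k N := tsum_nonneg fun n =>
      mul_nonneg (primeInd_nonneg n) (phi_nonneg k (by positivity))
    have hlam : 1 + max 0 (Real.log N) ≤ 2 := by
      have := Real.log_le_sub_one_of_pos hN
      have : max 0 (Real.log N) ≤ 1 := max_le (by norm_num) (by linarith)
      linarith
    have hle : (480 * Z + phiMass k) * N ≤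
        (3 * C1 + 2 * (480 * Z + phiMass k)) * N / (1 + max 0 (Real.log N)) := by
      have hpos : 0 < 1 + max 0 (Real.log N) := by positivity
      rw [le_div_iff₀ hpos]
      have : (480 * Z + phiMass k) * N * (1 + max 0 (Real.log N)) ≤
        (480 * Z + phiMass k) * N * 2 := by gcongr
      nlinarith [mul_pos hC1 hN]
    refine ⟨hs, le_trans ?_ hle, le_trans ?_ hle⟩
    · nlinarith [mul_nonneg hZ0 hN.le, mul_pos hc0 hN]
    · have hNl : N * |Real.log N| ≤ 2 := by
        rcases le_total N 1 with h | h
        · rw [abs_of_nonpos (Real.log_nonpos hN.le h)]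
          have := Real.log_le_sub_one_of_pos (inv_pos.2 hN)
          rw [Real.log_inv] at this
          have h3 : N * N⁻¹ = 1 := mul_inv_cancel₀ hN.ne'
          nlinarith
        · rw [abs_of_nonneg (Real.log_nonneg h)]
          have := Real.log_le_sub_one_of_pos hN
          nlinarith
      refine (abs_sub _ _).trans ?_
      rw [abs_mul, abs_of_nonneg hQ0, abs_of_pos (mul_pos hc0 hN)]
      have : |Real.log N| * Qsum k N ≤ 480 * Z * N := by
        calc _ ≤ |Real.log N| * (240 * N ^ 2 * Z) := by gcongr
          _ = 240 * Z * N * (N * |Real.log N|) := by ring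
          _ ≤ 240 * Z * N * 2 := by gcongr
          _ = _ := by ring
      nlinarith

/-! ### Asymptotics of `Φ_{(1)}` -/

lemma zetaR_eq {s : ℝ} (hs : 1 < s) : zetaR s = ∑' j : ℕ+, (j : ℝ) ^ (-s) := by
  have h : riemannZeta (s : ℂ) = ((∑' j : ℕ+, (j : ℝ) ^ (-s) : ℝ) : ℂ) := by
    rw [zeta_eq_tsum_one_div_nat_add_one_cpow (by simpa using hs),
      tsum_pnat_eq_tsum_succ (f := fun n : ℕ => (n : ℝ) ^ (-s)), Complex.ofReal_tsum]
    refine tsum_congr fun n => ?_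
    rw [Complex.ofReal_cpow (by positivity)]
    push_cast
    rw [Complex.cpow_neg, one_div]
  rw [zetaR, h, Complex.ofReal_re]

lemma summable_pnat_rpow {s : ℝ} (hs : 1 < s) : Summable fun j : ℕ+ => (j : ℝ) ^ (-s) :=
  (Real.summable_nat_rpow.2 (by linarith : -s < -1)).comp_injective PNat.coe_injective

lemma zetaR_pos {s : ℝ} (hs : 1 < s) : 0 < zetaR s := by
  rw [zetaR_eq hs]
  refine (summable_pnat_rpow hs).tsum_pos (fun j => by positivity) 1 (by simp)

lemma summable_pnat_log_sq {s : ℝ} (hs : 1 < s) :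
    Summable fun j : ℕ+ => (1 + Real.log j) ^ 2 * (j : ℝ) ^ (-s) := by
  set ε := (s - 1) / 4 with hε
  have hε0 : 0 < ε := by rw [hε]; linarith
  refine Summable.of_nonneg_of_le (fun j => by positivity) (fun j => ?_)
    ((summable_pnat_rpow (s := 1 + 2 * ε) (by linarith)).mul_left ((1 + 1 / ε) ^ 2))
  have hj : (1 : ℝ) ≤ j := by exact_mod_cast Nat.one_le_iff_ne_zero.2 j.ne_zero
  have hj0 : (0 : ℝ) < j := by linarith
  have h1 : 1 + Real.log j ≤ (1 + 1 / ε) * (j : ℝ) ^ ε := by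
    have := Real.log_le_rpow_div hj0.le hε0
    have h2 := Real.one_le_rpow hj hε0.le
    calc _ ≤ (j : ℝ) ^ ε + (j : ℝ) ^ ε / ε := by linarith
      _ = _ := by ring
  have hl := Real.log_nonneg hj
  calc _ ≤ ((1 + 1 / ε) * (j : ℝ) ^ ε) ^ 2 * (j : ℝ) ^ (-s) := by gcongr
    _ = (1 + 1 / ε) ^ 2 * (((j : ℝ) ^ ε) ^ 2 * (j : ℝ) ^ (-s)) := by ring
    _ = _ := by
      rw [← Real.rpow_natCast ((j : ℝ) ^ ε), ← Real.rpow_mul hj0.le, ← Real.rpow_add hj0]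
      congr 2
      rw [hε]; push_cast; ring

/-- The scale `(y / j) ^ (1 / k)` at which the `j`-th inner sum of `Φ_{(1)}` is smoothed. -/
noncomputable def scale (k : ℕ) (y : ℝ) (j : ℕ+) : ℝ := (y / j) ^ (1 / k : ℝ)

lemma scale_pos (k : ℕ) {y : ℝ} (hy : 0 < y) (j : ℕ+) : 0 < scale k y j := by
  have hj0 : (0 : ℝ) < j := by exact_mod_cast j.pos
  unfold scale; positivity

lemma scale_pow {k : ℕ} (hk : 1 ≤ k) {y : ℝ} (hy : 0 < y) (j : ℕ+) : scale k y j ^ k = y / j := by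
  have hj0 : (0 : ℝ) < j := by exact_mod_cast j.pos
  rw [scale, one_div, Real.rpow_inv_natCast_pow (by positivity) (by omega)]

lemma log_scale (k : ℕ) {y : ℝ} (hy : 0 < y) (j : ℕ+) :
    Real.log (scale k y j) = (Real.log y - Real.log j) / k := by
  have hj0 : (0 : ℝ) < j := by exact_mod_cast j.pos
  rw [scale, Real.log_rpow (by positivity), Real.log_div hy.ne' hj0.ne']
  ring

lemma div_mul_scale {k : ℕ} (hk : 1 ≤ k) {y : ℝ} (hy : 0 < y) (j : ℕ+) :
    y / j * scale k y j = y ^ ((k + 1) / k : ℝ) * (j : ℝ) ^ (-((k + 1) / k : ℝ)) := by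
  have hk0 : (0 : ℝ) < k := by exact_mod_cast hk
  have hj0 : (0 : ℝ) < j := by exact_mod_cast j.pos
  rw [scale, Real.rpow_neg hj0.le, ← div_eq_mul_inv, ← Real.div_rpow hy.le hj0.le,
    show ((k : ℝ) + 1) / k = 1 + 1 / k by field_simp, Real.rpow_add (by positivity), Real.rpow_one]

/-- Since `j p^k / y = (p / N_j)^k` at the scale `N_j = (y / j)^(1/k)`, the `j`-th inner sum is
`(y / j) ∑_p φ(p / N_j)`. -/
lemma Phim_eq {k : ℕ} (hk : 1 ≤ k) {y : ℝ} (hy : 0 < y) :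
    Phim k 1 (Real.exp (-1 / y)) = ∑' j : ℕ+, y / j * Qsum k (scale k y j) := by
  unfold Phim
  refine tsum_congr fun j => ?_
  have hj0 : (0 : ℝ) < j := by exact_mod_cast j.pos
  rw [Qsum, ← tsum_mul_left]
  have h := tsum_subtype {p : ℕ | p.Prime} (fun p : ℕ => y / j * phi k (p / scale k y j))
  have e1 : ∀ n : ℕ, y / j * (primeInd n * phi k (n / scale k y j)) =
      Set.indicator {p : ℕ | p.Prime} (fun p : ℕ => y / j * phi k (p / scale k y j)) n := by
    intro n
    by_cases hn : n.Prime
    · rw [Set.indicator_of_mem (by exact hn), primeInd, if_pos hn, one_mul]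
    · rw [Set.indicator_of_notMem (by exact hn), primeInd, if_neg hn, zero_mul, mul_zero]
  rw [tsum_congr e1, ← h]
  refine tsum_congr fun p => ?_
  rw [phi, div_pow, scale_pow hk hy, ← Real.exp_nat_mul]
  have : ((1 : ℕ) : ℤ) - 1 = 0 := by norm_num
  rw [this, zpow_zero, one_mul, mul_one, ← mul_assoc]
  congr 1
  · field_simp
  · congr 1
    push_cast
    field_simp

/-- `Φ_{(1)}(e^{-1/y}) = ζ(s) Γ(s) y^s / log y · (1 + O(1 / log y))` with `s = (k + 1) / k`, together
with a crude upper bound valid for all `y > 0`. -/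
theorem Phim_asymp {k : ℕ} (hk : 1 ≤ k) : ∃ C : ℝ, 0 < C ∧ ∀ y : ℝ, 0 < y →
    Phim k 1 (Real.exp (-1 / y)) ≤ C * y ^ ((k + 1) / k : ℝ) ∧
    (1 < y → |Real.log y * Phim k 1 (Real.exp (-1 / y)) -
      zetaR ((k + 1) / k) * Real.Gamma ((k + 1) / k) * y ^ ((k + 1) / k : ℝ)| ≤
      C * y ^ ((k + 1) / k : ℝ) / Real.log y) := by
  obtain ⟨C, hC, h⟩ := Qsum_asymp hk
  have hk0 : (0 : ℝ) < k := by exact_mod_cast hk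
  set s : ℝ := (k + 1) / k with hs
  have hs1 : 1 < s := by rw [hs, lt_div_iff₀ hk0]; linarith
  set Z := ∑' j : ℕ+, (1 + Real.log j) ^ 2 * (j : ℝ) ^ (-s) with hZ
  have hZs := summable_pnat_log_sq hs1
  have hZ0 : 0 ≤ Z := tsum_nonneg fun j => by positivity
  have hz0 := zetaR_pos hs1
  refine ⟨C * zetaR s + k * (C * k * Z), by positivity, fun y hy => ?_⟩
  have hys : 0 < y ^ s := by positivity
  rw [Phim_eq hk hy]
  have hjpos : ∀ j : ℕ+, (0 : ℝ) < j := fun j => by exact_mod_cast j.pos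
  have hQ0 : ∀ N : ℝ, 0 < N → 0 ≤ Qsum k N := fun N hN => tsum_nonneg fun n =>
    mul_nonneg (primeInd_nonneg n) (phi_nonneg k (by positivity))
  have hb : ∀ j : ℕ+, y / j * Qsum k (scale k y j) ≤ C * y ^ s * (j : ℝ) ^ (-s) := by
    intro j
    have hN := scale_pos k hy j
    have hj := hjpos j
    obtain ⟨-, h1, -⟩ := h _ hN
    have h2 : Qsum k (scale k y j) ≤ C * scale k y j := h1.trans
      (div_le_self (by positivity) (by linarith [le_max_left 0 (Real.log (scale k y j))]))
    calc _ ≤ y / j * (C * scale k y j) := by gcongr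
      _ = C * (y / j * scale k y j) := by ring
      _ = _ := by rw [div_mul_scale hk hy]; ring
  have hF : Summable fun j : ℕ+ => y / j * Qsum k (scale k y j) :=
    Summable.of_nonneg_of_le (fun j => mul_nonneg (by have := hjpos j; positivity)
      (hQ0 _ (scale_pos k hy j))) hb ((summable_pnat_rpow hs1).mul_left _)
  have hFle : ∑' j : ℕ+, y / j * Qsum k (scale k y j) ≤ C * zetaR s * y ^ s := by
    have := hF.tsum_le_tsum hb ((summable_pnat_rpow hs1).mul_left _)
    rw [tsum_mul_left, ← zetaR_eq hs1] at this
    linarith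
  have hlast : 0 ≤ k * (C * k * Z) := by positivity
  refine ⟨hFle.trans (by gcongr; linarith), fun hy1 => ?_⟩
  set L := Real.log y with hL
  have hL0 : 0 < L := Real.log_pos hy1
  have hd : ∀ j : ℕ+, ‖L / k * (y / j * Qsum k (scale k y j)) -
      phiMass k * y ^ s * (j : ℝ) ^ (-s)‖ ≤
      C * k * y ^ s / L * ((1 + Real.log j) ^ 2 * (j : ℝ) ^ (-s)) := by
    intro j
    have hN := scale_pos k hy j
    have hj := hjpos j
    have hj1 : (1 : ℝ) ≤ j := by exact_mod_cast Nat.one_le_iff_ne_zero.2 j.ne_zero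
    have hlj := Real.log_nonneg hj1
    obtain ⟨-, h1, h2⟩ := h _ hN
    have hls := log_scale k hy j
    set N := scale k y j with hNdef
    set lam := 1 + max 0 (Real.log N) with hlam
    have hlam1 : 1 ≤ lam := by rw [hlam]; linarith [le_max_left 0 (Real.log N)]
    have hlamN : Real.log N ≤ lam - 1 := by rw [hlam]; linarith [le_max_right 0 (Real.log N)]
    have hk1 : (1 : ℝ) ≤ k := by exact_mod_cast hk
    have hdivk : Real.log j / k ≤ Real.log j := div_le_self hlj hk1
    -- the loss from scales much smaller than `y^(1/k)` is only a factor `1 + log j`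
    have hinv : 1 / lam ≤ k * (1 + Real.log j) / L := by
      rw [div_le_div_iff₀ (by linarith) hL0]
      have : L = k * Real.log N + Real.log j := by rw [hls]; field_simp; ring
      have : L ≤ k * ((lam - 1) + Real.log j) := by
        rw [this]; nlinarith
      have h3 : (lam - 1) + Real.log j ≤ (1 + Real.log j) * lam := by nlinarith
      nlinarith
    have hid : L / k * (y / j * Qsum k N) - phiMass k * y ^ s * (j : ℝ) ^ (-s) =
        y / j * ((Real.log N * Qsum k N - phiMass k * N) + Real.log j / k * Qsum k N) := by
      rw [mul_assoc, ← div_mul_scale hk hy, ← hNdef, hls]; ring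
    have hyj : 0 < y / j := by positivity
    have hQ := hQ0 N hN
    rw [hid, norm_mul, Real.norm_of_nonneg hyj.le, Real.norm_eq_abs]
    have h4 : |(Real.log N * Qsum k N - phiMass k * N) + Real.log j / k * Qsum k N| ≤
        C * N * (1 + Real.log j) * (1 / lam) := by
      refine (abs_add_le _ _).trans ?_
      rw [abs_of_nonneg (by positivity : 0 ≤ Real.log j / k * Qsum k N)]
      have : Real.log j / k * Qsum k N ≤ Real.log j * (C * N / lam) := by gcongr
      calc _ ≤ C * N / lam + Real.log j * (C * N / lam) := add_le_add h2 this
        _ = _ := by ring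
    calc _ ≤ y / j * (C * N * (1 + Real.log j) * (1 / lam)) := by gcongr
      _ ≤ y / j * (C * N * (1 + Real.log j) * (k * (1 + Real.log j) / L)) := by gcongr
      _ = C * k / L * (1 + Real.log j) ^ 2 * (y / j * N) := by ring
      _ = _ := by rw [hNdef, div_mul_scale hk hy]; ring
  have hsum := tsum_of_norm_bounded (hZs.mul_left (C * k * y ^ s / L)).hasSum hd
  rw [(hF.mul_left _).tsum_sub ((summable_pnat_rpow hs1).mul_left _), tsum_mul_left, tsum_mul_left,
    tsum_mul_left, ← zetaR_eq hs1, Real.norm_eq_abs] at hsum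
  set F := ∑' j : ℕ+, y / j * Qsum k (scale k y j) with hFdef
  have hmass : k * phiMass k = Real.Gamma s := by rw [phiMass, hs]; field_simp
  have e : L * F - zetaR s * Real.Gamma s * y ^ s =
      k * (L / k * F - phiMass k * y ^ s * zetaR s) := by
    rw [← hmass]; field_simp
  rw [e, abs_mul, abs_of_pos hk0]
  calc _ ≤ k * (C * k * y ^ s / L * Z) := by gcongr
    _ = k * (C * k * Z) * y ^ s / L := by ring
    _ ≤ _ := by
      gcongr
      have : 0 < C * zetaR s := by positivity
      linarith

/-! ### Inversion -/

lemma abs_one_add_rpow_sub_le {a w : ℝ} (ha : 0 < a) (ha1 : a ≤ 1) (hw : |w| ≤ 1 / 2) :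
    |(1 + w) ^ a - (1 + a * w)| ≤ 6 * w ^ 2 := by
  have hw' := abs_le.1 hw
  have hpos : 0 < 1 + w := by linarith
  have h1 : |Real.log (1 + w) - w| ≤ 2 * w ^ 2 := by
    have h := Real.abs_log_sub_add_sum_range_le (x := -w) (by rw [abs_neg]; linarith) 1
    simp only [Finset.sum_range_one, abs_neg, sub_neg_eq_add] at h
    have h2 : |w| ^ (1 + 1) / (1 - |w|) ≤ 2 * w ^ 2 := by
      rw [div_le_iff₀ (by linarith), ← sq_abs w]
      have h3 : 0 ≤ |w| ^ 2 * (1 / 2 - |w|) := mul_nonneg (sq_nonneg _) (by linarith)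
      norm_num
      nlinarith
    refine le_trans (le_of_eq ?_) (h.trans h2)
    congr 1
    norm_num
    ring
  set l := Real.log (1 + w) with hl
  have hl2 : |l| ≤ 2 * |w| := by
    have := abs_sub_abs_le_abs_sub l w
    have h3 : 2 * w ^ 2 ≤ |w| := by rw [← sq_abs w]; nlinarith [abs_nonneg w]
    linarith
  have hal : |a * l| ≤ 2 * |w| := by
    rw [abs_mul, abs_of_pos ha]
    nlinarith [abs_nonneg l]
  have h4 := Real.abs_exp_sub_one_sub_id_le (x := a * l) (by linarith)
  have h5 : (a * l) ^ 2 ≤ 4 * w ^ 2 := by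
    rw [← sq_abs (a * l), ← sq_abs w]
    nlinarith [abs_nonneg (a * l)]
  have e : (1 + w) ^ a - (1 + a * w) = (Real.exp (a * l) - 1 - a * l) + a * (l - w) := by
    rw [Real.rpow_def_of_pos hpos, mul_comm (Real.log (1 + w)) a]; ring
  rw [e]
  refine (abs_add_le _ _).trans ?_
  rw [abs_mul, abs_of_pos ha]
  nlinarith [abs_nonneg (l - w)]

lemma log_div_sub_aux {a q L : ℝ} (ha : a ≠ 0) (hq : q ≠ 0) (hL : L ≠ 0) (lq m la : ℝ) :
    (lq + m - la) / (q * L / a) - a * m / L =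
      a / (q * L) * (-(m * (q - 1)) + (lq - la)) := by
  field_simp
  ring

set_option maxHeartbeats 1000000 in
/-- Inversion in logarithmic coordinates: `L` stands for `log y`, `X` for `log x`, and
`x = e^g (1 + e) y^(1/a) / log y` with `e = O(1 / log y)`. The relation gives
`a X / L = 1 - a log L / L + O(1 / L)`, and raising to the power `a` costs a further factor `a` in
the coefficient of `log L / L`, where `a log L / L` agrees with `log X / X` up to `O(1 / X)`. -/
lemma inversion_core {a : ℝ} (ha : 0 < a) (ha1 : a ≤ 1) (g K₁ : ℝ) (hK₁ : 0 ≤ K₁) :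
    ∃ K : ℝ, ∀ᶠ L : ℝ in atTop, ∀ e X : ℝ, |e| ≤ K₁ / L →
      X = L / a + g + Real.log (1 + e) - Real.log L →
      |((1 + e) * (a * X / L)) ^ a - (1 - a * (Real.log X / X))| ≤ K / X := by
  set K₂ := |g| + 1 with hK₂
  have hK₂0 : 0 ≤ K₂ := by positivity
  set K₃ := K₂ + 2 * K₁ with hK₃
  have hK₃0 : 0 ≤ K₃ := by positivity
  set K₄ := 6 * (2 * K₃ ^ 2 + 2) + K₃ + (2 * (K₂ + 1) + 2 * (1 + |Real.log a|)) with hK₄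
  have hK₄0 : 0 ≤ K₄ := by positivity
  refine ⟨K₄ * (2 / a), ?_⟩
  have hlog2 : ∀ᶠ L : ℝ in atTop, Real.log L ^ 2 ≤ L := by
    have := (Real.isLittleO_pow_log_id_atTop (n := 2)).bound (show (0 : ℝ) < 1 by norm_num)
    filter_upwards [this, eventually_ge_atTop 1] with L h h1
    simp only [norm_pow, Real.norm_eq_abs, sq_abs, id, one_mul] at h
    rwa [abs_of_nonneg (by linarith : 0 ≤ L)] at h
  filter_upwards [hlog2, eventually_ge_atTop (1 : ℝ), eventually_ge_atTop (2 * K₁),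
    eventually_ge_atTop (4 * (2 * K₃ ^ 2 + 2)), eventually_ge_atTop (4 * (2 * K₂ ^ 2 + 2))]
    with L hL2 hL1 hLe hL3 hL4 e X he hX
  have hL0 : 0 < L := by linarith
  set m := Real.log L with hm
  have hm0 : 0 ≤ m := Real.log_nonneg hL1
  have hmL : m ≤ L := by have := Real.log_le_sub_one_of_pos hL0; linarith
  have he2 : |e| ≤ 1 / 2 := he.trans (by rw [div_le_iff₀ hL0]; linarith)
  have he3 := abs_le.1 he2
  have hle : |Real.log (1 + e)| ≤ 1 := by
    rw [abs_le]
    constructor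
    · have h1 : Real.log (1 / 2) ≤ Real.log (1 + e) :=
        Real.log_le_log (by norm_num) (by linarith)
      have h2 := Real.log_two_lt_d9
      rw [one_div, Real.log_inv] at h1
      linarith
    · linarith [Real.log_le_sub_one_of_pos (show 0 < 1 + e by linarith)]
  -- a common estimate for quantities of the shape `-a log L / L + O(1 / L)`
  have hsq : ∀ u K : ℝ, 0 ≤ K → |u + a * m / L| ≤ K / L → 4 * (2 * K ^ 2 + 2) ≤ L →
      |u| ≤ K / L + m / L ∧ u ^ 2 ≤ (2 * K ^ 2 + 2) / L ∧ |u| ≤ 1 / 2 := by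
    intro u K hK hu hKL
    have h1 : |u| ≤ K / L + m / L := by
      have : |u| ≤ |u + a * m / L| + |a * m / L| := by
        have := abs_sub (u + a * m / L) (a * m / L)
        simpa using this
      have h2 : |a * m / L| ≤ m / L := by
        rw [abs_of_nonneg (by positivity)]
        gcongr
        nlinarith
      linarith
    have h2 : u ^ 2 ≤ (2 * K ^ 2 + 2) / L := by
      rw [← sq_abs u]
      calc |u| ^ 2 ≤ (K / L + m / L) ^ 2 := by gcongr
        _ = (K + m) ^ 2 / L / L := by field_simp
        _ ≤ (2 * K ^ 2 + 2) * L / L / L := by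
          gcongr
          nlinarith [sq_nonneg (K - m), sq_nonneg K]
        _ = _ := by field_simp
    refine ⟨h1, h2, ?_⟩
    have h3 : (2 * K ^ 2 + 2) / L ≤ 1 / 4 := by rw [div_le_iff₀ hL0]; linarith
    exact abs_le_of_sq_le_sq' (by nlinarith) (by norm_num) |> abs_le.2
  obtain ⟨q, hq⟩ : ∃ q, q = a * X / L := ⟨_, rfl⟩
  rw [← hq]
  have hq1 : |(q - 1) + a * m / L| ≤ K₂ / L := by
    have : (q - 1) + a * m / L = a * (g + Real.log (1 + e)) / L := by
      rw [hq, hX]; field_simp; ring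
    rw [this, abs_div, abs_of_pos hL0, abs_mul, abs_of_pos ha]
    gcongr
    have := abs_add_le g (Real.log (1 + e))
    nlinarith [abs_nonneg (g + Real.log (1 + e))]
  obtain ⟨q1, -, q3⟩ := hsq _ _ hK₂0 hq1 hL4
  have q4 := abs_le.1 q3
  have hw1 : |((1 + e) * q - 1) + a * m / L| ≤ K₃ / L := by
    have : ((1 + e) * q - 1) + a * m / L = ((q - 1) + a * m / L) + e * q := by ring
    rw [this]
    refine (abs_add_le _ _).trans ?_
    rw [abs_mul, abs_of_pos (by linarith : 0 < q)]
    have : |e| * q ≤ K₁ / L * 2 :=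
      mul_le_mul he (by linarith) (by linarith) (by positivity)
    calc _ ≤ K₂ / L + K₁ / L * 2 := add_le_add hq1 this
      _ = _ := by rw [hK₃]; ring
  obtain ⟨-, w2, w3⟩ := hsq _ _ hK₃0 hw1 hL3
  set w := (1 + e) * q - 1 with hw
  have hR := abs_one_add_rpow_sub_le ha ha1 w3
  have hq0 : 0 < q := by linarith
  have hXq : X = q * L / a := by rw [hq]; field_simp
  have hX0 : 0 < X := by rw [hXq]; positivity
  have hlogX : Real.log X = Real.log q + m - Real.log a := by
    rw [hXq, Real.log_div (by positivity) ha.ne', Real.log_mul hq0.ne' hL0.ne']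
  have hlq : |Real.log q| ≤ 1 := by
    rw [abs_le]
    constructor
    · have h1 : Real.log (1 / 2) ≤ Real.log q := Real.log_le_log (by norm_num) (by linarith)
      have h2 := Real.log_two_lt_d9
      rw [one_div, Real.log_inv] at h1
      linarith
    · linarith [Real.log_le_sub_one_of_pos hq0]
  have h3 : |Real.log X / X - a * m / L| ≤ (2 * (K₂ + 1) + 2 * (1 + |Real.log a|)) / L := by
    have e1 : Real.log X / X - a * m / L =
        a / (q * L) * (-(m * (q - 1)) + (Real.log q - Real.log a)) := by
      rw [hlogX, hXq]
      exact log_div_sub_aux ha.ne' hq0.ne' hL0.ne' _ _ _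
    have b1 : |m * (q - 1)| ≤ K₂ + 1 := by
      rw [abs_mul, abs_of_nonneg hm0]
      calc m * |q - 1| ≤ m * (K₂ / L + m / L) := by gcongr
        _ = (K₂ * m + m ^ 2) / L := by ring
        _ ≤ (K₂ * L + L) / L := by gcongr
        _ = K₂ + 1 := by field_simp
    have b2 : |-(m * (q - 1)) + (Real.log q - Real.log a)| ≤ (K₂ + 1) + (1 + |Real.log a|) := by
      refine (abs_add_le _ _).trans ?_
      rw [abs_neg]
      have := abs_sub (Real.log q) (Real.log a)
      linarith
    have b3 : a / (q * L) ≤ 2 / L := by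
      rw [div_le_div_iff₀ (by positivity) hL0]
      nlinarith
    rw [e1, abs_mul, abs_of_pos (by positivity : 0 < a / (q * L))]
    calc _ ≤ 2 / L * ((K₂ + 1) + (1 + |Real.log a|)) := by gcongr
      _ = _ := by ring
  have hfin : |((1 + e) * q) ^ a - (1 - a * (Real.log X / X))| ≤ K₄ / L := by
    have e1 : ((1 + e) * q) ^ a - (1 - a * (Real.log X / X)) =
        ((1 + w) ^ a - (1 + a * w)) + a * (w + a * m / L) + a * (Real.log X / X - a * m / L) := by
      rw [hw, add_sub_cancel]; ring
    rw [e1]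
    refine (abs_add_three _ _ _).trans ?_
    rw [abs_mul, abs_mul, abs_of_pos ha]
    have c1 : a * |w + a * m / L| ≤ K₃ / L :=
      (mul_le_of_le_one_left (abs_nonneg _) ha1).trans hw1
    have c2 := (mul_le_of_le_one_left (abs_nonneg (Real.log X / X - a * m / L)) ha1).trans h3
    calc _ ≤ 6 * ((2 * K₃ ^ 2 + 2) / L) + K₃ / L +
          (2 * (K₂ + 1) + 2 * (1 + |Real.log a|)) / L := by
            refine add_le_add (add_le_add (hR.trans ?_) c1) c2
            gcongr
      _ = _ := by rw [hK₄]; ring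
  refine hfin.trans ?_
  rw [hXq, div_le_div_iff₀ hL0 (by positivity)]
  have : q * L / a ≤ 2 / a * L := by
    rw [div_mul_eq_mul_div]
    gcongr
    linarith
  calc K₄ * (q * L / a) ≤ K₄ * (2 / a * L) := by gcongr
    _ = _ := by ring

/-- Proposition 1.3, equation (1.4): asymptotic for `x log(1/ρ(x))`. -/
theorem stmt1 (k : ℕ) (hk : 1 ≤ k) (ρ : ℝ → ℝ)
    (hρ : ∀ x, ρ x ∈ Set.Ioo (0 : ℝ) 1)
    (hx : ∀ᶠ x : ℝ in atTop, Phim k 1 (ρ x) = x) :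
    ∃ E : ℝ → ℝ, (E =O[atTop] fun x => 1 / Real.log x) ∧
      ∀ᶠ x : ℝ in atTop,
        x * Real.log (1 / ρ x) =
          ((((k : ℝ) + 1) / k * zetaR (((k : ℝ) + 1) / k) * Real.Gamma (((k : ℝ) + 1) / k) *
              x ^ ((1 : ℝ) / k) / Real.log x) ^ ((k : ℝ) / ((k : ℝ) + 1))) *
            (1 - (k : ℝ) / ((k : ℝ) + 1) * (Real.log (Real.log x) / Real.log x) + E x) := by
  have hk0 : (0 : ℝ) < k := by exact_mod_cast hk
  obtain ⟨C, hC, hF⟩ := Phim_asymp hk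
  set s : ℝ := ((k : ℝ) + 1) / k with hs
  set a : ℝ := (k : ℝ) / ((k : ℝ) + 1) with ha
  have hs1 : 1 < s := by rw [hs, lt_div_iff₀ hk0]; linarith
  have hs0 : 0 < s := by linarith
  have ha0 : 0 < a := by positivity
  have ha1 : a ≤ 1 := by rw [ha, div_le_one (by positivity)]; linarith
  have hsa : s * a = 1 := by rw [hs, ha]; field_simp
  set G : ℝ := zetaR s * Real.Gamma s with hG
  have hG0 : 0 < G := mul_pos (zetaR_pos hs1) (Real.Gamma_pos_of_pos hs0)
  -- `y = 1 / log (1 / ρ)`, so that `ρ = exp (-1 / y)`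
  set y : ℝ → ℝ := fun x => 1 / Real.log (1 / ρ x) with hy
  have hlogρ : ∀ x, 0 < Real.log (1 / ρ x) := fun x =>
    Real.log_pos ((one_lt_div (hρ x).1).2 (hρ x).2)
  have hy0 : ∀ x, 0 < y x := fun x => one_div_pos.2 (hlogρ x)
  have hρy : ∀ x, ρ x = Real.exp (-1 / y x) := by
    intro x
    have : -1 / y x = Real.log (ρ x) := by
      simp only [hy]
      rw [div_div_eq_mul_div, div_one, one_div, Real.log_inv]
      ring
    rw [this, Real.exp_log (hρ x).1]
  have hytop : Tendsto y atTop atTop := by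
    have h1 : Tendsto (fun x : ℝ => (x / C) ^ a) atTop atTop :=
      (tendsto_rpow_atTop ha0).comp (tendsto_id.atTop_div_const hC)
    refine tendsto_atTop_mono' _ ?_ h1
    filter_upwards [hx, eventually_gt_atTop 0] with x hxx hx0
    have h2 := (hF (y x) (hy0 x)).1
    rw [← hρy, hxx] at h2
    have h3 : x / C ≤ y x ^ s := by rw [div_le_iff₀ hC]; linarith
    calc (x / C) ^ a ≤ (y x ^ s) ^ a := by gcongr
      _ = y x := by rw [← Real.rpow_mul (hy0 x).le, hsa, Real.rpow_one]
  have hLtop : Tendsto (fun x => Real.log (y x)) atTop atTop := Real.tendsto_log_atTop.comp hytop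
  obtain ⟨K, hK⟩ := inversion_core ha0 ha1 (Real.log G) (C / G) (by positivity)
  set M : ℝ → ℝ := fun x => (s * zetaR s * Real.Gamma s * x ^ ((1 : ℝ) / k) / Real.log x) ^ a with hM
  have hMeq : ∀ x, (s * zetaR s * Real.Gamma s * x ^ ((1 : ℝ) / k) / Real.log x) ^ a = M x :=
    fun x => rfl
  have key : ∀ᶠ x : ℝ in atTop, 0 < M x ∧ 0 < Real.log x ∧
      |x * Real.log (1 / ρ x) / M x - (1 - a * (Real.log (Real.log x) / Real.log x))| ≤
        K / Real.log x := by
    filter_upwards [hx, eventually_gt_atTop 1, hytop.eventually_gt_atTop 1, hLtop.eventually hK,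
      hLtop.eventually_gt_atTop (C / G)] with x hxx hx1 hy1 hcore hLCG
    have hx0 : 0 < x := by linarith
    have hX0 : 0 < Real.log x := Real.log_pos hx1
    have hyx := hy0 x
    have h2 := (hF (y x) hyx).2 hy1
    rw [← hρy, hxx] at h2
    set L := Real.log (y x) with hL
    have hL0 : 0 < L := Real.log_pos hy1
    have hys : 0 < y x ^ s := by positivity
    set e := L * x / (G * y x ^ s) - 1 with he
    have heb : |e| ≤ C / G / L := by
      have : e = (L * x - G * y x ^ s) / (G * y x ^ s) := by rw [he]; field_simp
      rw [this, abs_div, abs_of_pos (by positivity : 0 < G * y x ^ s), div_le_iff₀ (by positivity)]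
      refine h2.trans (le_of_eq ?_)
      field_simp
    have h1e : 1 + e = L * x / (G * y x ^ s) := by rw [he]; ring
    have hXeq : Real.log x = L / a + Real.log G + Real.log (1 + e) - Real.log L := by
      rw [h1e, Real.log_div (by positivity) (by positivity), Real.log_mul hL0.ne' hx0.ne',
        Real.log_mul hG0.ne' hys.ne', Real.log_rpow hyx, ← hL]
      have : L / a = s * L := by rw [div_eq_iff ha0.ne']; linear_combination (-L) * hsa
      rw [this]; ring
    have hM0 : 0 < M x := by
      have := zetaR_pos hs1
      have := Real.Gamma_pos_of_pos hs0
      simp only [hM]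
      positivity
    refine ⟨hM0, hX0, ?_⟩
    have hratio : x * Real.log (1 / ρ x) / M x = ((1 + e) * (a * Real.log x / L)) ^ a := by
      have e1 : x * Real.log (1 / ρ x) = (x ^ s / y x ^ s) ^ a := by
        rw [← Real.div_rpow hx0.le hyx.le, ← Real.rpow_mul (by positivity), hsa, Real.rpow_one]
        simp only [hy]
        rw [div_div_eq_mul_div, div_one]
      have hzg : s * zetaR s * Real.Gamma s = s * G := by rw [hG]; ring
      simp only [hM]
      rw [hzg, e1, ← Real.div_rpow (by positivity) (by positivity), h1e]
      congr 1
      have hxs : x ^ s = x * x ^ ((1 : ℝ) / k) := by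
        rw [show s = 1 + 1 / k by rw [hs]; field_simp, Real.rpow_add hx0, Real.rpow_one]
      have hxk : 0 < x ^ ((1 : ℝ) / k) := by positivity
      have ha' : a = 1 / s := by rw [eq_div_iff hs0.ne']; linarith
      rw [hxs, ha']
      field_simp
    rw [hratio]
    exact hcore e (Real.log x) heb hXeq
  refine ⟨fun x => x * Real.log (1 / ρ x) / M x -
    (1 - a * (Real.log (Real.log x) / Real.log x)), ?_, ?_⟩
  · refine Asymptotics.IsBigO.of_bound K ?_
    filter_upwards [key] with x ⟨_, h2, h3⟩
    rw [Real.norm_eq_abs, Real.norm_of_nonneg (by positivity), mul_one_div]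
    exact h3
  · filter_upwards [key] with x ⟨h1, _, _⟩
    rw [hMeq, add_sub_cancel, mul_div_cancel₀ _ h1.ne']
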